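/- Let R be a local Cohen–Macaulay ring with infinite residue field and let I be a perfect R-ideal of height 2. Assume that I is generically a complete intersection and that I = (Δ, α) : I for some Δ ∈ I^{(2)} and some α ∈ I. Then for every j ≥ 1, core(I^{(2j)}) = I^{(4j−1)}; moreover, if R is Gorenstein then γ(I^{(2j)}) = 4j − 1. -/

import Mathlib

open IsLocalRing

universe u v

namespace CPU

section Defs

variable {R : Type u} [CommRing R]

/-- The minimal number of generators of a submodule, as an extended natural number. -/
noncomputable def muE {M : Type v} [AddCommGroup M] [Module R M] (N : Submodule R M) : ℕ∞ :=
  sInf {n : ℕ∞ | ∃ s : Finset M, (s.card : ℕ∞) = n ∧ Submodule.span R (s : Set M) = N}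

/-- The Krull dimension of a ring, valued in `WithBot ℕ∞`. -/
noncomputable def rDim (S : Type v) [CommRing S] : WithBot ℕ∞ :=
  ringKrullDim S

/-- `J` is a reduction of `I`. -/
def IsReduction (J I : Ideal R) : Prop :=
  J ≤ I ∧ ∃ r : ℕ, I ^ (r + 1) = J * I ^ r

/-- `J` is a minimal reduction of `I`. -/
def IsMinimalReduction (J I : Ideal R) : Prop :=
  IsReduction J I ∧ ∀ J' : Ideal R, IsReduction J' I → J' ≤ J → J' = J

/-- The core of an ideal: the intersection of all of its minimal reductions. -/
noncomputable def core (I : Ideal R) : Ideal R :=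
  sInf {J : Ideal R | IsMinimalReduction J I}

/-- The reduction number of `I`. -/
noncomputable def reductionNumber (I : Ideal R) : ℕ∞ :=
  sInf {n : ℕ∞ | ∃ r : ℕ, (r : ℕ∞) = n ∧ ∃ J : Ideal R,
    IsMinimalReduction J I ∧ I ^ (r + 1) = J * I ^ r}

/-- `γ(I)`: the least number of minimal reductions whose intersection is the core. -/
noncomputable def gamma (I : Ideal R) : ℕ∞ :=
  sInf {n : ℕ∞ | ∃ t : ℕ, (t : ℕ∞) = n ∧ ∃ Js : Fin t → Ideal R,
    (∀ i, IsMinimalReduction (Js i) I) ∧ core I = ⨅ i, Js i}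

/-- The height of an ideal. -/
noncomputable def ht (I : Ideal R) : WithBot ℕ∞ :=
  ⨅ (p : PrimeSpectrum R) (_ : I ≤ p.asIdeal),
    rDim (Localization.AtPrime p.asIdeal)

/-- The Krull dimension of the special fiber ring of `I`,
i.e. the analytic spread of `I`. -/
noncomputable def fiberDim [IsLocalRing R] (I : Ideal R) : WithBot ℕ∞ :=
  rDim (↥(reesAlgebra I) ⧸
    (Ideal.map (algebraMap R ↥(reesAlgebra I)) (maximalIdeal R)))

/-- The condition `G_s`. -/
def Gcond (I : Ideal R) (s : ℕ) : Prop :=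
  ∀ p : PrimeSpectrum R, I ≤ p.asIdeal →
    rDim (Localization.AtPrime p.asIdeal) < (s : WithBot ℕ∞) →
    (muE (Ideal.map (algebraMap R (Localization.AtPrime p.asIdeal)) I) : WithBot ℕ∞) ≤
      rDim (Localization.AtPrime p.asIdeal)

/-- Depth of a module over a local ring, via lengths of regular sequences in the
maximal ideal. -/
noncomputable def mDepth (R : Type u) [CommRing R] [IsLocalRing R]
    (M : Type v) [AddCommGroup M] [Module R M] : ℕ∞ :=
  sSup {n : ℕ∞ | ∃ rs : List R, (∀ x ∈ rs, x ∈ maximalIdeal R) ∧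
    RingTheory.Sequence.IsRegular M rs ∧ (rs.length : ℕ∞) = n}

/-- Depth of the quotient `R/K` of a local ring `R`. -/
noncomputable def qDepth (R : Type u) [CommRing R] [IsLocalRing R] (K : Ideal R) : ℕ∞ :=
  mDepth R (R ⧸ K)

/-- The socle of `R/K`, for `R` local. -/
noncomputable def socle (R : Type u) [CommRing R] [IsLocalRing R] (K : Ideal R) :
    Ideal (R ⧸ K) :=
  Submodule.colon (⊥ : Ideal (R ⧸ K)) (Ideal.map (Ideal.Quotient.mk K) (maximalIdeal R))

/-- The Cohen–Macaulay type of the quotient `R/K` of a local ring `R`. -/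
noncomputable def qType (R : Type u) [CommRing R] [IsLocalRing R] (K : Ideal R) : ℕ∞ :=
  sInf {n : ℕ∞ | ∃ rs : List R, (∀ x ∈ rs, x ∈ maximalIdeal R) ∧
    RingTheory.Sequence.IsRegular (R ⧸ K) rs ∧ (rs.length : ℕ∞) = qDepth R K ∧
    muE (socle R (K ⊔ Ideal.ofList rs)) = n}

/-- Cohen–Macaulayness for a quotient `R/K` of a local ring `R`. -/
def IsCMQuot (R : Type u) [CommRing R] [IsLocalRing R] (K : Ideal R) : Prop :=
  rDim (R ⧸ K) = (qDepth R K : WithBot ℕ∞)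

/-- A Cohen–Macaulay local ring: depth equals Krull dimension. -/
def IsCMLocalRing (R : Type u) [CommRing R] [IsLocalRing R] : Prop :=
  rDim R = (qDepth R (⊥ : Ideal R) : WithBot ℕ∞)

/-- A Gorenstein local ring: Cohen–Macaulay of type one. -/
def IsGorensteinLocalRing (R : Type u) [CommRing R] [IsLocalRing R] : Prop :=
  IsCMLocalRing R ∧ qType R (⊥ : Ideal R) = 1

/-- Gorensteinness of the quotient ring `R/K` of a local ring. -/
def IsGorQuot (R : Type u) [CommRing R] [IsLocalRing R] (K : Ideal R) : Prop :=
  IsCMQuot R K ∧ qType R K = 1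

/-- A regular local ring: the maximal ideal is generated by `dim R` elements. -/
def IsRegularLocal (R : Type u) [CommRing R] [IsLocalRing R] : Prop :=
  IsNoetherianRing R ∧ (muE (maximalIdeal R) : WithBot ℕ∞) = rDim R

/-- Serre's condition `S₂` for the quotient ring `R/K`. -/
def QuotS2 (K : Ideal R) : Prop :=
  ∀ (q : Ideal R) (hq : q.IsPrime), K ≤ q →
    letI := hq
    min 2 (rDim ((Localization.AtPrime q) ⧸
        (Ideal.map (algebraMap R (Localization.AtPrime q)) K)))
      ≤ (qDepth (Localization.AtPrime q)
          (Ideal.map (algebraMap R (Localization.AtPrime q)) K) : WithBot ℕ∞)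

/-- `K` is an `s`-residual intersection of `I`. -/
def IsResidualIntersection (I K : Ideal R) (s : ℕ) : Prop :=
  K ≠ ⊤ ∧ ht I ≤ (s : WithBot ℕ∞) ∧ (s : WithBot ℕ∞) ≤ ht K ∧
    ∃ a : Ideal R, a ≤ I ∧ (∃ f : Finset R, f.card ≤ s ∧ Ideal.span (f : Set R) = a) ∧
      K = Submodule.colon a I

/-- `K` is a geometric `s`-residual intersection of `I`. -/
def IsGeometricRI (I K : Ideal R) (s : ℕ) : Prop :=
  IsResidualIntersection I K s ∧ (s : WithBot ℕ∞) + 1 ≤ ht (I ⊔ K)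

/-- `I` is weakly `s`-residually `S₂`. -/
def WeaklyResS2 (I : Ideal R) (s : ℕ) : Prop :=
  ∀ i ≤ s, ∀ K : Ideal R, IsGeometricRI I K i → QuotS2 K

/-- The condition `AN_s` for `I`. -/
def ANcond [IsLocalRing R] (I : Ideal R) (s : ℕ) : Prop :=
  ∀ i ≤ s, ∀ K : Ideal R, IsResidualIntersection I K i → IsCMQuot R K

/-- The condition `AN_s⁻` for `I`. -/
def ANminus [IsLocalRing R] (I : Ideal R) (s : ℕ) : Prop :=
  ∀ i ≤ s, ∀ K : Ideal R, IsGeometricRI I K i → IsCMQuot R K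

/-- `I` is universally weakly `s`-residually `S₂`: for every finite set of
variables, the extension of `I` to `R(x₁, …, x_n)` is weakly `s`-residually `S₂`. -/
def UnivWeaklyResS2 [IsLocalRing R] (I : Ideal R) (s : ℕ) : Prop :=
  ∀ (n : ℕ)
    (hP : (Ideal.map (MvPolynomial.C (σ := Fin n)) (maximalIdeal R)).IsPrime),
    letI := hP
    WeaklyResS2 (Ideal.map
      ((algebraMap (MvPolynomial (Fin n) R)
        (Localization.AtPrime
          (Ideal.map (MvPolynomial.C (σ := Fin n)) (maximalIdeal R)))).comp
        (MvPolynomial.C)) I) s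

/-- The `j`-th Fitting ideal of (the module) `I`. -/
noncomputable def fittingIdeal (I : Ideal R) (j : ℕ) : Ideal R :=
  ⨆ (n : ℕ) (π : (Fin n → R) →ₗ[R] R) (_ : LinearMap.range π = I),
    Ideal.span {d : R | ∃ (v : Fin (n - j) → (Fin n → R)) (r : Fin (n - j) → Fin n),
      (∀ k, π (v k) = 0) ∧ d = Matrix.det (Matrix.of fun i k => v k (r i))}

/-- The set `Q(I)` of primes containing `Fitt_ℓ(I)` at which `R` has dimension `ℓ`
and `I` has analytic spread `ℓ`. -/
def QSet [IsLocalRing R] (I : Ideal R) (l : ℕ) : Set (PrimeSpectrum R) :=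
  {p | fittingIdeal I l ≤ p.asIdeal ∧
    rDim (Localization.AtPrime p.asIdeal) = (l : WithBot ℕ∞) ∧
    fiberDim (Ideal.map (algebraMap R (Localization.AtPrime p.asIdeal)) I)
      = (l : WithBot ℕ∞)}

/-- An ideal is integrally closed if it admits no larger ideal of which it is a
reduction. -/
def IsIntClosedIdeal (I : Ideal R) : Prop :=
  ∀ J : Ideal R, IsReduction I J → J = I

/-- A normal ideal: all powers are integrally closed. -/
def IsNormalIdeal (I : Ideal R) : Prop :=
  ∀ j : ℕ, IsIntClosedIdeal (I ^ j)

/-- `φ` is a presentation matrix of the ideal `I` (with `n = μ(I)` rows). -/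
def Presents {n m : ℕ} (φ : Matrix (Fin n) (Fin m) R) (I : Ideal R) : Prop :=
  muE I = (n : ℕ∞) ∧ ∃ π : (Fin n → R) →ₗ[R] R, LinearMap.range π = I ∧
    LinearMap.range (Matrix.toLin' φ) = LinearMap.ker π

/-- The ideal of `t × t` minors of a matrix. -/
noncomputable def minorsIdeal {n m : ℕ} (t : ℕ) (φ : Matrix (Fin n) (Fin m) R) : Ideal R :=
  Ideal.span {d : R | ∃ (r : Fin t → Fin n) (c : Fin t → Fin m),
    d = (φ.submatrix r c).det}

/-- The grade of an ideal: the supremum of lengths of regular sequences contained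
in it. -/
noncomputable def grade (I : Ideal R) : ℕ∞ :=
  sSup {n : ℕ∞ | ∃ rs : List R, (∀ x ∈ rs, x ∈ I) ∧
    RingTheory.Sequence.IsRegular R rs ∧ (rs.length : ℕ∞) = n}

end Defs

/-- `M` has projective dimension at most `n` over `R`. -/
def ProjDimLE (R : Type u) [CommRing R] :
    (n : ℕ) → (M : Type u) → [AddCommGroup M] → [Module R M] → Prop
  | 0, M, _, _ => Module.Projective R M
  | n + 1, M, _, _ => ∃ (k : ℕ) (f : (Fin k → R) →ₗ[R] M), Function.Surjective f ∧
      ProjDimLE R n ↥(LinearMap.ker f)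

section Defs2

variable {R : Type u} [CommRing R]

/-- `M` has projective dimension exactly `n` over `R`. -/
def ProjDimEq (R : Type u) [CommRing R] (M : Type u) [AddCommGroup M] [Module R M]
    (n : ℕ) : Prop :=
  ProjDimLE R n M ∧ ∀ m : ℕ, ProjDimLE R m M → n ≤ m

/-- A perfect ideal: the projective dimension of `R/I` equals the grade of `I`. -/
def IsPerfectIdeal (I : Ideal R) : Prop :=
  ∃ g : ℕ, grade I = (g : ℕ∞) ∧ ProjDimEq R (R ⧸ I) g

/-- The multiplicative set which is the complement of the union of the associated
primes of `R/H`. -/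
def assComplement (H : Ideal R) : Submonoid R where
  carrier := {r : R | ∀ p ∈ associatedPrimes R (R ⧸ H), r ∉ p}
  one_mem' := fun p hp => (Ideal.ne_top_iff_one p).mp hp.1.ne_top
  mul_mem' := fun {a b} ha hb p hp hab =>
    (hp.1.mem_or_mem hab).elim (ha p hp) (hb p hp)

/-- The `j`-th symbolic power of `H`. -/
noncomputable def symbolicPower (H : Ideal R) (j : ℕ) : Ideal R :=
  Ideal.comap (algebraMap R (Localization (assComplement H)))
    (Ideal.map (algebraMap R (Localization (assComplement H))) (H ^ j))

/-- Serre's condition `S₂` for a module. -/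
def ModuleS2 (S : Type u) [CommRing S] (M : Type v) [AddCommGroup M] [Module S M] : Prop :=
  ∀ (q : Ideal S) (hq : q.IsPrime),
    letI := hq
    min 2 (rDim ((Localization.AtPrime q) ⧸
        (Module.annihilator (Localization.AtPrime q) (LocalizedModule q.primeCompl M))))
      ≤ (mDepth (Localization.AtPrime q) (LocalizedModule q.primeCompl M) : WithBot ℕ∞)

/-- `M` is a maximal Cohen–Macaulay `S`-module. -/
def IsMCM (S : Type u) [CommRing S] (M : Type v) [AddCommGroup M] [Module S M] : Prop :=
  ∀ (q : Ideal S) (hq : q.IsMaximal),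
    letI := hq.isPrime
    (mDepth (Localization.AtPrime q) (LocalizedModule q.primeCompl M) : WithBot ℕ∞) =
      rDim (Localization.AtPrime q)

end Defs2


section Proof
set_option linter.unusedSectionVars false

/-- A two-element regular sequence, in elementary form. -/
structure RP {S : Type u} [CommRing S] (x y : S) : Prop where
  hx : ∀ c, x * c = 0 → c = 0
  hy : ∀ c d, y * c = x * d → ∃ e, c = x * e

section Loc
variable {S : Type u} [CommRing S] {x y : S}

theorem pow_split (x y : S) (k : ℕ) {z : S} (hz : z ∈ (Ideal.span {x, y}) ^ k) :
    ∃ a ∈ (Ideal.span {x, y}) ^ (k - 1), ∃ c, z = x * a + c * y ^ k := by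
  have key : ∀ k : ℕ, (Ideal.span {x, y}) ^ (k + 1) ≤
      Ideal.span {x} * (Ideal.span {x, y}) ^ k ⊔ Ideal.span {y ^ (k + 1)} := by
    intro k
    induction k with
    | zero => simp [Ideal.span_insert]
    | succ k ih =>
      rw [pow_succ' _ (k + 1)]
      conv_lhs => enter [1]; rw [Ideal.span_insert]
      rw [Ideal.sup_mul]
      refine sup_le le_sup_left ?_
      refine (Ideal.mul_mono_right ih).trans ?_
      rw [Ideal.mul_sup]
      refine sup_le ?_ ?_
      · refine le_trans ?_ le_sup_left
        rw [mul_left_comm]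
        refine Ideal.mul_mono_right ?_
        rw [pow_succ']
        exact Ideal.mul_mono_left (Ideal.span_mono (by simp))
      · refine le_trans ?_ le_sup_right
        rw [Ideal.span_singleton_mul_span_singleton, ← pow_succ']
  cases k with
  | zero => exact ⟨0, zero_mem _, z, by simp⟩
  | succ k =>
    obtain ⟨p, hp, q, hq, rfl⟩ := Submodule.mem_sup.1 (key k hz)
    obtain ⟨a, ha, rfl⟩ := Ideal.mem_span_singleton_mul.1 hp
    obtain ⟨c, rfl⟩ := Ideal.mem_span_singleton'.1 hq
    exact ⟨a, ha, c, rfl⟩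

theorem x_mem (x y : S) : x ∈ Ideal.span {x, y} := Ideal.subset_span (by simp)
theorem y_mem (x y : S) : y ∈ Ideal.span {x, y} := Ideal.subset_span (by simp)

theorem ypow_mem (x y : S) (k : ℕ) : y ^ k ∈ (Ideal.span {x, y}) ^ k :=
  Ideal.pow_mem_pow (y_mem x y) k

theorem mul_mem_pow' {I : Ideal S} {a b : S} {p q k : ℕ} (ha : a ∈ I ^ p) (hb : b ∈ I ^ q)
    (h : k ≤ p + q) : a * b ∈ I ^ k :=
  Ideal.pow_le_pow_right h (by rw [pow_add]; exact Ideal.mul_mem_mul ha hb)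

theorem RP.ypow (h : RP x y) (n : ℕ) {c d : S} (e : y ^ n * c = x * d) : ∃ e, c = x * e := by
  induction n generalizing c d with
  | zero => exact ⟨d, by simpa using e⟩
  | succ n ih =>
    rw [pow_succ', mul_assoc] at e
    obtain ⟨e', he'⟩ := h.hy _ _ e
    exact ih he'

theorem RP.xcancel (h : RP x y) {c d : S} (e : x * c = x * d) : c = d := by
  rw [← sub_eq_zero]; apply h.hx; rw [mul_sub, e, sub_self]

theorem RP.Q1 (h : RP x y) (k : ℕ) {z : S} (hz : x * z ∈ (Ideal.span {x, y}) ^ k) :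
    z ∈ (Ideal.span {x, y}) ^ (k - 1) := by
  obtain ⟨a, ha, c, hc⟩ := pow_split x y k hz
  obtain ⟨c', rfl⟩ := h.ypow k (c := c) (d := z - a) (by linear_combination -hc)
  have : z = a + c' * y ^ k := h.xcancel (by linear_combination hc)
  rw [this]
  exact add_mem ha (Ideal.mul_mem_left _ _ (Ideal.pow_le_pow_right (Nat.sub_le _ _) (ypow_mem x y k)))

theorem RP.Q2 (h : RP x y) (n k : ℕ) {z d w : S} (e : y ^ n * z = x * d + w)
    (hw : w ∈ (Ideal.span {x, y}) ^ k) :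
    ∃ z' ∈ (Ideal.span {x, y}) ^ (k - n), ∃ e, z = z' + x * e := by
  obtain ⟨a, ha, c, hc⟩ := pow_split x y k hw
  rcases Nat.lt_or_ge n k with hk | hk
  · obtain ⟨m, rfl⟩ := Nat.exists_eq_add_of_lt hk
    have e2 : y ^ n * (z - c * y ^ (m + 1)) = x * (d + a) := by
      rw [mul_sub, e, hc]; ring
    obtain ⟨e', he'⟩ := h.ypow n e2
    refine ⟨c * y ^ (m + 1), ?_, e', by linear_combination he'⟩
    have : n + m + 1 - n = m + 1 := by omega
    rw [this]
    exact Ideal.mul_mem_left _ _ (ypow_mem x y _)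
  · refine ⟨z, ?_, 0, by ring⟩
    rw [Nat.sub_eq_zero_of_le hk]; simp

/-- peel off one factor `x`. -/
theorem RP.peel (h : RP x y) (n k : ℕ) {F v f₁ : S} (hv : IsUnit v)
    (hF : F = v * y ^ n + x * f₁) (hFn : F ∈ (Ideal.span {x, y}) ^ n) {a c : S}
    (hac : F * a + x * c ∈ (Ideal.span {x, y}) ^ k) :
    ∃ a' ∈ (Ideal.span {x, y}) ^ (k - n), ∃ a'', a = a' + x * a'' ∧
      c + F * a'' ∈ (Ideal.span {x, y}) ^ (k - 1) := by
  obtain ⟨z', hz', e, he⟩ := h.Q2 n k (z := v * a) (d := - c - f₁ * a) (w := F * a + x * c)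
    (by rw [hF]; ring) hac
  obtain ⟨w, hw⟩ := hv.exists_left_inv
  refine ⟨w * z', Ideal.mul_mem_left _ _ hz', w * e, by linear_combination w * he - a * hw, ?_⟩
  apply h.Q1
  have : x * (c + F * (w * e)) = (F * a + x * c) - F * (w * z') := by
    linear_combination -F * w * he + a * F * hw
  rw [this]
  refine sub_mem hac ?_
  exact mul_mem_pow' hFn (Ideal.mul_mem_left _ w hz') (by omega)

/-- quasi-regularity -/
theorem RP.quasi (h : RP x y) (N : ℕ) (v : ℕ → S)
    (hv : ∑ l ∈ Finset.range (N + 1), v l * (x ^ l * y ^ (N - l)) ∈ (Ideal.span {x, y}) ^ (N + 1)) :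
    ∀ l ≤ N, v l ∈ Ideal.span {x, y} := by
  induction N generalizing v with
  | zero => 
    intro l hl
    obtain rfl : l = 0 := by omega
    simpa using hv
  | succ N ih =>
    rw [Finset.sum_range_succ'] at hv
    have e1 : ∑ l ∈ Finset.range (N + 1), v (l + 1) * (x ^ (l + 1) * y ^ (N + 1 - (l + 1)))
        = x * ∑ l ∈ Finset.range (N + 1), v (l + 1) * (x ^ l * y ^ (N - l)) := by
      rw [Finset.mul_sum]
      refine Finset.sum_congr rfl fun l _ => ?_
      rw [Nat.add_sub_add_right]; ring
    rw [e1] at hv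
    set s := ∑ l ∈ Finset.range (N + 1), v (l + 1) * (x ^ l * y ^ (N - l)) with hs
    obtain ⟨z', hz', e, he⟩ := h.Q2 (N + 1) (N + 1 + 1) (z := v 0) (d := - s) (by simp only [Nat.sub_zero, pow_zero]; ring) hv
    have h0 : v 0 ∈ Ideal.span {x, y} := by
      rw [he]
      refine add_mem ?_ (Ideal.mul_mem_right _ _ (x_mem x y))
      simpa using hz'
    have h1 : s ∈ (Ideal.span {x, y}) ^ (N + 1) := by
      have := h.Q1 (N + 1 + 1) (z := s) (by
        have h2 : v 0 * (x ^ 0 * y ^ (N + 1 - 0)) ∈ (Ideal.span {x, y}) ^ (N + 1 + 1) := by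
          simp only [pow_zero, one_mul, Nat.sub_zero]
          exact mul_mem_pow' (p := 1) (by simpa using h0) (ypow_mem x y (N + 1)) (by omega)
        exact (Submodule.add_mem_iff_left _ h2).1 hv)
      simpa using this
    intro l hl
    cases l with
    | zero => exact h0
    | succ l => exact ih (fun l => v (l + 1)) h1 l (by omega)

end Loc

section Loc2
variable {S : Type u} [CommRing S] {x y : S}

theorem mem_pair_mul {f g z : S} {L : Ideal S} :
    z ∈ Ideal.span {f, g} * L ↔ ∃ a ∈ L, ∃ b ∈ L, z = a * f + b * g := by
  rw [Ideal.span_insert, Ideal.sup_mul, Submodule.mem_sup]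
  constructor
  · rintro ⟨p, hp, q, hq, rfl⟩
    obtain ⟨a, ha, rfl⟩ := Ideal.mem_span_singleton_mul.1 hp
    obtain ⟨b, hb, rfl⟩ := Ideal.mem_span_singleton_mul.1 hq
    exact ⟨a, ha, b, hb, by ring⟩
  · rintro ⟨a, ha, b, hb, rfl⟩
    exact ⟨_, Ideal.mem_span_singleton_mul.2 ⟨a, ha, mul_comm _ _⟩, _,
      Ideal.mem_span_singleton_mul.2 ⟨b, hb, mul_comm _ _⟩, rfl⟩

/-- The lead coefficient argument. -/
theorem RP.lead [IsLocalRing S] (h : RP x y) (hx : x ∈ maximalIdeal S) {n k : ℕ} (hk : n ≤ k)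
    {A B f₁ g₁ f g : S} (hf : f = x * f₁ + A * y ^ n) (hg : g = x * g₁ + B * y ^ n)
    (hJ : (Ideal.span {x, y}) ^ k ≤ Ideal.span {f, g} * (Ideal.span {x, y}) ^ (k - n)) :
    IsUnit A ∨ IsUnit B := by
  by_contra hcon
  push Not at hcon
  have hA : A ∈ maximalIdeal S := hcon.1
  have hB : B ∈ maximalIdeal S := hcon.2
  obtain ⟨a, ha, b, hb, hab⟩ := mem_pair_mul.1 (hJ (ypow_mem x y k))
  obtain ⟨a1, -, a0, rfl⟩ := pow_split x y _ ha
  obtain ⟨b1, -, b0, rfl⟩ := pow_split x y _ hb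
  obtain ⟨l, rfl⟩ := Nat.exists_eq_add_of_le hk
  have e1 : n + l - n = l := by omega
  rw [e1] at hab
  obtain ⟨e, he⟩ := h.ypow (n + l) (c := 1 - a0 * A - b0 * B)
    (d := a1 * f + a0 * y ^ l * f₁ + b1 * g + b0 * y ^ l * g₁) (by
      rw [hf, hg] at hab; rw [hf, hg]; rw [pow_add] at hab ⊢; linear_combination hab)
  have : (1 : S) ∈ maximalIdeal S := by
    have : (1 : S) = x * e + a0 * A + b0 * B := by linear_combination he
    rw [this]
    exact add_mem (add_mem (Ideal.mul_mem_right _ _ hx) (Ideal.mul_mem_left _ _ hA))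
      (Ideal.mul_mem_left _ _ hB)
  exact (maximalIdeal.isMaximal S).ne_top ((Ideal.eq_top_iff_one _).2 this)

theorem normal_aux {n : ℕ} {A B f₁ g₁ f g : S} (hA : IsUnit A)
    (hf : f = x * f₁ + A * y ^ n) (hg : g = x * g₁ + B * y ^ n)
    (hf₁ : f₁ ∈ (Ideal.span {x, y}) ^ (n - 1)) (hg₁ : g₁ ∈ (Ideal.span {x, y}) ^ (n - 1)) :
    ∃ f₂ ∈ (Ideal.span {x, y}) ^ (n - 1), ∃ g₂ ∈ (Ideal.span {x, y}) ^ (n - 1),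
      Ideal.span {f, g} = Ideal.span {y ^ n + x * f₂, x * g₂} := by
  obtain ⟨w, hw⟩ := hA.exists_left_inv
  refine ⟨w * f₁, Ideal.mul_mem_left _ _ hf₁, g₁ - B * w * f₁,
    sub_mem hg₁ (Ideal.mul_mem_left _ _ hf₁), ?_⟩
  apply le_antisymm
  · rw [Ideal.span_le]
    rintro z (rfl | rfl)
    · exact Ideal.mem_span_pair.2 ⟨A, 0, by rw [hf]; linear_combination x * f₁ * hw⟩
    · exact Ideal.mem_span_pair.2 ⟨B, 1, by rw [hg]; ring⟩
  · rw [Ideal.span_le]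
    rintro z (rfl | rfl)
    · exact Ideal.mem_span_pair.2 ⟨w, 0, by rw [hf]; linear_combination y ^ n * hw⟩
    · exact Ideal.mem_span_pair.2 ⟨-B * w, 1, by
        rw [hf, hg]; linear_combination - B * y ^ n * hw⟩

theorem RP.normal [IsLocalRing S] (h : RP x y) (hx : x ∈ maximalIdeal S) {n k : ℕ} (hk : n ≤ k)
    {f g : S} (hf : f ∈ (Ideal.span {x, y}) ^ n) (hg : g ∈ (Ideal.span {x, y}) ^ n)
    (hJ : (Ideal.span {x, y}) ^ k ≤ Ideal.span {f, g} * (Ideal.span {x, y}) ^ (k - n)) :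
    ∃ f₂ ∈ (Ideal.span {x, y}) ^ (n - 1), ∃ g₂ ∈ (Ideal.span {x, y}) ^ (n - 1),
      Ideal.span {f, g} = Ideal.span {y ^ n + x * f₂, x * g₂} := by
  obtain ⟨f1, hf1, A, hfe⟩ := pow_split x y _ hf
  obtain ⟨g1, hg1, B, hge⟩ := pow_split x y _ hg
  rcases h.lead hx hk hfe hge hJ with hA | hB
  · exact normal_aux hA hfe hge hf1 hg1
  · rw [Set.pair_comm f g]
    exact normal_aux hB hge hfe hg1 hf1

theorem RP.step (h : RP x y) {n k : ℕ} {f₁ g₁ : S} (hk : 2 * n ≤ k + 1) (hn : 1 ≤ n)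
    (hJ : (Ideal.span {x, y}) ^ k ≤ Ideal.span {y ^ n + x * f₁, x * g₁} *
      (Ideal.span {x, y}) ^ (k - n)) {z : S} (hz : z ∈ (Ideal.span {x, y}) ^ (k - 1)) :
    ∃ a ∈ (Ideal.span {x, y}) ^ (k - n - 1), ∃ b ∈ (Ideal.span {x, y}) ^ (k - n - 1), ∃ b0,
      z = a * (y ^ n + x * f₁) + b * (x * g₁) + b0 * y ^ (k - n) * g₁ := by
  have hxz : x * z ∈ (Ideal.span {x, y}) ^ k :=
    mul_mem_pow' (p := 1) (by simpa using x_mem x y) hz (by omega)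
  obtain ⟨a, ha, b, hb, e⟩ := mem_pair_mul.1 (hJ hxz)
  obtain ⟨a', rfl⟩ := h.ypow n (c := a) (d := z - a * f₁ - b * g₁) (by linear_combination -e)
  obtain ⟨b1, hb1, b0, rfl⟩ := pow_split x y _ hb
  refine ⟨a', h.Q1 _ ha, b1, hb1, b0, ?_⟩
  apply h.xcancel
  linear_combination e

theorem RP.descent (h : RP x y) {n k : ℕ} {f₁ g₁ : S} (hk : 2 * n ≤ k) (hn : 1 ≤ n)
    (hf₁ : f₁ ∈ (Ideal.span {x, y}) ^ (n - 1)) (hg₁ : g₁ ∈ (Ideal.span {x, y}) ^ (n - 1))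
    (hJ : (Ideal.span {x, y}) ^ k ≤ Ideal.span {y ^ n + x * f₁, x * g₁} *
      (Ideal.span {x, y}) ^ (k - n)) :
    (Ideal.span {x, y}) ^ (k - 1) ≤ Ideal.span {y ^ n + x * f₁, x * g₁} *
      (Ideal.span {x, y}) ^ (k - 1 - n) := by
  intro z hz
  obtain ⟨a, ha, b, hb, b0, e⟩ := h.step (by omega) hn hJ hz
  have hkk : k - 1 - n = k - n - 1 := by omega
  rw [hkk]
  refine mem_pair_mul.2 ⟨a + b0 * (y ^ (k - 2 * n) * g₁), add_mem ha (Ideal.mul_mem_left _ _ ?_),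
    b - b0 * (y ^ (k - 2 * n) * f₁), sub_mem hb (Ideal.mul_mem_left _ _ ?_), ?_⟩
  · exact mul_mem_pow' (ypow_mem x y _) hg₁ (by omega)
  · exact mul_mem_pow' (ypow_mem x y _) hf₁ (by omega)
  · rw [e]
    have : k - n = (k - 2 * n) + n := by omega
    rw [this, pow_add]; ring

theorem RP.locBD [IsLocalRing S] (h : RP x y) (hx : x ∈ maximalIdeal S) {n k : ℕ} (hn : 1 ≤ n)
    (hk : n ≤ k)
    {f g : S} (hf : f ∈ (Ideal.span {x, y}) ^ n) (hg : g ∈ (Ideal.span {x, y}) ^ n)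
    (hJ : (Ideal.span {x, y}) ^ k ≤ Ideal.span {f, g} * (Ideal.span {x, y}) ^ (k - n)) :
    (Ideal.span {x, y}) ^ (2 * n - 1) ≤ Ideal.span {f, g} ∧
    ∃ m ∈ (Ideal.span {x, y}) ^ (2 * n - 2),
      (Ideal.span {x, y}) ^ (2 * n - 2) ≤ Ideal.span {f, g} ⊔ Ideal.span {m} := by
  obtain ⟨f₁, hf₁, g₁, hg₁, hfg⟩ := h.normal hx hk hf hg hJ
  rw [hfg] at hJ ⊢
  have up : ∀ d : ℕ, (Ideal.span {x, y}) ^ (k + d) ≤ Ideal.span {y ^ n + x * f₁, x * g₁} *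
      (Ideal.span {x, y}) ^ (k + d - n) := by
    intro d
    have : k + d - n = (k - n) + d := by omega
    rw [this, pow_add, pow_add, ← mul_assoc]
    exact Ideal.mul_mono_left hJ
  have down : ∀ d : ℕ, (Ideal.span {x, y}) ^ (2 * n - 1 + d) ≤
      Ideal.span {y ^ n + x * f₁, x * g₁} * (Ideal.span {x, y}) ^ (2 * n - 1 + d - n) →
      (Ideal.span {x, y}) ^ (2 * n - 1) ≤
      Ideal.span {y ^ n + x * f₁, x * g₁} * (Ideal.span {x, y}) ^ (2 * n - 1 - n) := by
    intro d
    induction d with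
    | zero => exact id
    | succ d ih =>
      intro hd
      apply ih
      exact h.descent (k := 2 * n - 1 + (d + 1)) (by omega) hn hf₁ hg₁ hd
  have main := down k (by
    have := up (2 * n - 1)
    rwa [add_comm k] at this)
  refine ⟨main.trans Ideal.mul_le_left, y ^ (n - 1) * g₁,
    mul_mem_pow' (ypow_mem x y _) hg₁ (by omega), ?_⟩
  intro z hz
  obtain ⟨a, ha, b, hb, b0, e⟩ := h.step (k := 2 * n - 1) (by omega) hn main
    (by rwa [show 2 * n - 1 - 1 = 2 * n - 2 by omega])
  rw [e, show 2 * n - 1 - n = n - 1 by omega, mul_assoc b0]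
  refine add_mem (Ideal.mem_sup_left ?_) (Ideal.mem_sup_right ?_)
  · exact Ideal.mem_span_pair.2 ⟨a, b, rfl⟩
  · exact Ideal.mul_mem_left _ _ (Ideal.mem_span_singleton_self _)

theorem RP.lower (h : RP x y) (hne : Ideal.span {x, y} ≠ ⊤) {N t : ℕ} (ht : t ≤ N)
    (J : Fin t → Ideal S) (m : Fin t → S) (hm : ∀ i, m i ∈ (Ideal.span {x, y}) ^ N)
    (h1 : ∀ i, (Ideal.span {x, y}) ^ (N + 1) ≤ J i)
    (h2 : ∀ i, (Ideal.span {x, y}) ^ N ≤ J i ⊔ Ideal.span {m i})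
    (h3 : ⨅ i, J i ≤ (Ideal.span {x, y}) ^ (N + 1)) : False := by
  have hmon : ∀ l : Fin (N + 1), x ^ (l : ℕ) * y ^ (N - l) ∈ (Ideal.span {x, y}) ^ N := fun l =>
    mul_mem_pow' (Ideal.pow_mem_pow (x_mem x y) _) (ypow_mem x y _) (by omega)
  have hc : ∀ (i : Fin t) (l : Fin (N + 1)), ∃ c, x ^ (l : ℕ) * y ^ (N - l) - c * m i ∈ J i := by
    intro i l
    obtain ⟨p, hp, q, hq, e⟩ := Submodule.mem_sup.1 (h2 i (hmon l))
    obtain ⟨c, rfl⟩ := Ideal.mem_span_singleton'.1 hq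
    exact ⟨c, by rw [← e]; simpa using hp⟩
  choose c hc using hc
  have : Nontrivial (S ⧸ Ideal.span {x, y}) := Ideal.Quotient.nontrivial_iff.2 hne
  let M : (Fin (N + 1) → S ⧸ Ideal.span {x, y}) →ₗ[S ⧸ Ideal.span {x, y}]
      (Fin t → S ⧸ Ideal.span {x, y}) :=
    Matrix.mulVecLin (Matrix.of fun i l => Ideal.Quotient.mk (Ideal.span {x, y}) (c i l))
  have hM : ¬ Function.Injective M := fun hi => by
    have := le_of_fin_injective _ M hi
    omega
  rw [← LinearMap.ker_eq_bot, Submodule.eq_bot_iff] at hM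
  push Not at hM
  obtain ⟨v, hv, hv0⟩ := hM
  obtain ⟨w, hw⟩ : ∃ w : Fin (N + 1) → S, ∀ l, Ideal.Quotient.mk _ (w l) = v l :=
    ⟨fun l => (Ideal.Quotient.mk_surjective (v l)).choose,
      fun l => (Ideal.Quotient.mk_surjective (v l)).choose_spec⟩
  apply hv0
  have hsum : ∑ l : Fin (N + 1), w l * (x ^ (l : ℕ) * y ^ (N - l)) ∈
      (Ideal.span {x, y}) ^ (N + 1) := by
    apply h3
    rw [Ideal.mem_iInf]
    intro i
    have e : ∑ l : Fin (N + 1), w l * (x ^ (l : ℕ) * y ^ (N - l)) =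
        ∑ l : Fin (N + 1), w l * (x ^ (l : ℕ) * y ^ (N - l) - c i l * m i) +
        (∑ l : Fin (N + 1), w l * c i l) * m i := by
      rw [Finset.sum_mul, ← Finset.sum_add_distrib]
      exact Finset.sum_congr rfl fun l _ => by ring
    rw [e]
    refine add_mem (sum_mem fun l _ => Ideal.mul_mem_left _ _ (hc i l)) (h1 i ?_)
    refine mul_mem_pow' (p := 1) ?_ (hm i) (by omega)
    rw [pow_one, ← Ideal.Quotient.eq_zero_iff_mem, map_sum]
    have := congrFun (LinearMap.mem_ker.1 hv) i
    simp only [M, Matrix.mulVecLin_apply, Matrix.mulVec, dotProduct, Matrix.of_apply,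
      Pi.zero_apply] at this
    rw [← this]
    refine Finset.sum_congr rfl fun l _ => ?_
    rw [map_mul, hw, mul_comm]
  have hq := h.quasi N (fun l => if hl : l < N + 1 then w ⟨l, hl⟩ else 0) (by
    rw [Finset.sum_range]
    simpa only [Fin.is_lt, dif_pos, Fin.eta] using hsum)
  ext l
  rw [← hw l]
  have := hq l (by omega)
  simp only [l.2, dif_pos] at this
  exact Ideal.Quotient.eq_zero_iff_mem.2 this

end Loc2

section Loc3
variable {S : Type u} [CommRing S] {x y : S}

theorem span_shift (x y l : S) : Ideal.span {x - l * y, y} = Ideal.span {x, y} := by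
  apply le_antisymm <;> rw [Ideal.span_le]
  · rintro z (rfl | rfl)
    · exact Ideal.mem_span_pair.2 ⟨1, -l, by ring⟩
    · exact y_mem _ _
  · rintro z (rfl | rfl)
    · exact Ideal.mem_span_pair.2 ⟨1, l, by ring⟩
    · exact y_mem _ _

theorem RP.ofUnit (h : RP x y) {D v i : S} {n : ℕ} (hv : IsUnit v) (hD : D = v * y ^ n + x * i) :
    RP x D := by
  refine ⟨h.hx, fun c d e => ?_⟩
  obtain ⟨w, hw⟩ := hv.exists_left_inv
  refine h.ypow n (c := c) (d := w * (d - i * c)) ?_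
  rw [hD] at e
  linear_combination w * e - y ^ n * c * hw

theorem RP.powpow (h : RP x y) (m n : ℕ) {c d : S} (e : y ^ m * c = x ^ n * d) :
    ∃ e, c = x ^ n * e := by
  induction n generalizing c d with
  | zero => exact ⟨c, by simp⟩
  | succ n ih =>
    obtain ⟨c', rfl⟩ := h.ypow m (c := c) (d := x ^ n * d) (by rw [e]; ring)
    obtain ⟨e', rfl⟩ := ih (c := c') (d := d) (h.xcancel (by linear_combination e))
    exact ⟨e', by ring⟩

theorem unit_pow {D v i : S} (hv : IsUnit v) (hD : D = v * y ^ 2 + x * i) (j : ℕ) :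
    ∃ v', IsUnit v' ∧ ∃ i', D ^ j = v' * y ^ (2 * j) + x * i' := by
  induction j with
  | zero => exact ⟨1, isUnit_one, 0, by simp⟩
  | succ j ih =>
    obtain ⟨v', hv', i', e⟩ := ih
    exact ⟨v' * v, hv'.mul hv, v' * y ^ (2 * j) * i + i' * D, by
      rw [pow_succ, e]; nth_rw 1 [hD]; rw [hD]; ring⟩

theorem RP.degc (h : RP x y) (n : ℕ) {F v f₁ : S} (hv : IsUnit v)
    (hF : F = v * y ^ n + x * f₁) (hFn : F ∈ (Ideal.span {x, y}) ^ n) (m k : ℕ) {a b : S}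
    (hab : F * a + x ^ m * b ∈ (Ideal.span {x, y}) ^ k) :
    ∃ a₀ ∈ (Ideal.span {x, y}) ^ (k - n), ∃ e, a = a₀ + x ^ m * e ∧
      b + F * e ∈ (Ideal.span {x, y}) ^ (k - m) := by
  induction m generalizing k a b with
  | zero => exact ⟨0, zero_mem _, a, by simp, by simpa [add_comm] using hab⟩
  | succ m ih =>
    obtain ⟨a', ha', a'', e1, h2⟩ := h.peel n k hv hF hFn (a := a) (c := x ^ m * b)
      (by convert hab using 2; ring)
    obtain ⟨a₀, ha₀, e, e2, h3⟩ := ih (k - 1) (a := a'') (b := b) (by rwa [add_comm])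
    refine ⟨a' + x * a₀, add_mem ha' ?_, e, by rw [e1, e2]; ring, ?_⟩
    · exact mul_mem_pow' (p := 1) (by simpa using x_mem x y) ha₀ (by omega)
    · rwa [show k - (m + 1) = k - 1 - m by omega]

theorem RP.ydiv (h : RP x y) (m : ℕ) {a d : S}
    (had : y * a - x ^ m * d ∈ (Ideal.span {x, y}) ^ (m + 1)) : a ∈ (Ideal.span {x, y}) ^ m := by
  induction m generalizing a d with
  | zero => simp
  | succ m ih =>
    obtain ⟨z', hz', e, he⟩ := h.Q2 1 (m + 1 + 1) (z := a) (d := x ^ m * d)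
      (by ring) had
    rw [Nat.add_sub_cancel] at hz'
    rw [he]
    refine add_mem hz' ?_
    refine mul_mem_pow' (p := 1) (by simpa using x_mem x y) (ih (a := e) (d := d) ?_) (by omega)
    have := h.Q1 (m + 1 + 1) (z := y * e - x ^ m * d) (by
      have : x * (y * e - x ^ m * d) = (y * a - x ^ (m + 1) * d) - y * z' := by
        rw [he]; ring
      rw [this]
      exact sub_mem had (mul_mem_pow' (p := 1) (by simpa using y_mem x y) hz' (by omega)))
    simpa using this

theorem RP.famOne (h : RP x y) {D v i : S} (hv : IsUnit v) (hD : D = v * y ^ 2 + x * i)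
    (hDI : D ∈ (Ideal.span {x, y}) ^ 2) (m : ℕ) :
    ∀ (lam a : ℕ → S) (C : S), (∀ l ≤ m, ∀ l' ≤ m, l ≠ l' → IsUnit (lam l - lam l')) →
      (∀ l ≤ m, a l ∈ (Ideal.span {x, y}) ^ (m - 1)) →
      (∀ l ≤ m, ∃ d, (D - lam l * (x * y)) * a l - C - x ^ (m + 1) * d ∈
        (Ideal.span {x, y}) ^ (m + 2)) →
      ∀ l ≤ m, a l ∈ (Ideal.span {x, y}) ^ m := by
  induction m with
  | zero => intros; simp
  | succ m ih =>
    intro lam a C hlam ha hC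
    obtain ⟨w, hw⟩ := hv.exists_left_inv
    have hxI : x ∈ (Ideal.span {x, y}) ^ 1 := by simpa using x_mem x y
    have hyI : y ∈ (Ideal.span {x, y}) ^ 1 := by simpa using y_mem x y
    have hDl : ∀ l, D - lam l * (x * y) ∈ (Ideal.span {x, y}) ^ 2 := fun l =>
      sub_mem hDI (Ideal.mul_mem_left _ _ (mul_mem_pow' hxI hyI le_rfl))
    obtain ⟨d0, hd0⟩ := hC 0 (by omega)
    have key : ∀ l ≤ m, ∃ b ∈ (Ideal.span {x, y}) ^ (m - 1),
        ∃ u, ∃ t ∈ (Ideal.span {x, y}) ^ (m + 1), a (l + 1) = a 0 + x * (u * b) + t ∧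
        ∃ d, (D - lam (l + 1) * (x * y)) * b - y * a 0 - x ^ (m + 1) * d ∈
          (Ideal.span {x, y}) ^ (m + 2) := by
      intro l hl
      obtain ⟨d1, hd1⟩ := hC (l + 1) (by omega)
      have hdiff := sub_mem hd1 hd0
      obtain ⟨z', hz', b', hb'⟩ := h.Q2 2 (m + 1 + 2) (z := v * (a (l + 1) - a 0))
        (d := - i * (a (l + 1) - a 0) + y * (lam (l + 1) * a (l + 1) - lam 0 * a 0) +
          x ^ (m + 1) * (d1 - d0)) (by rw [hD]; ring) hdiff
      rw [Nat.add_sub_cancel] at hz'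
      obtain ⟨ν, hν⟩ := (hlam (l + 1) (by omega) 0 (by omega) (by omega)).exists_left_inv
      have e1 : a (l + 1) = a 0 + x * (w * b') + w * z' := by
        linear_combination w * hb' - (a (l + 1) - a 0) * hw
      have hb1 : w * b' ∈ (Ideal.span {x, y}) ^ (m - 1) := by
        apply h.Q1
        have : x * (w * b') = a (l + 1) - a 0 - w * z' := by rw [e1]; ring
        rw [this]
        refine sub_mem (sub_mem (ha _ (by omega)) (ha _ (by omega))) ?_
        exact Ideal.mul_mem_left _ _ (Ideal.pow_le_pow_right (by omega) hz')
      refine ⟨ν * (w * b'), Ideal.mul_mem_left _ _ hb1, lam (l + 1) - lam 0, w * z',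
        Ideal.mul_mem_left _ _ hz', ?_, ν * (d1 - d0), ?_⟩
      · linear_combination e1 - x * w * b' * hν
      · have h5 := h.Q1 (m + 1 + 2)
          (z := (D - lam (l + 1) * (x * y)) * (w * b') - (lam (l + 1) - lam 0) * (y * a 0)
            - x ^ (m + 1) * (d1 - d0)) (by
          have : x * ((D - lam (l + 1) * (x * y)) * (w * b') - (lam (l + 1) - lam 0) * (y * a 0)
            - x ^ (m + 1) * (d1 - d0)) =
            ((D - lam (l + 1) * (x * y)) * a (l + 1) - C - x ^ (m + 1 + 1) * d1 -
            ((D - lam 0 * (x * y)) * a 0 - C - x ^ (m + 1 + 1) * d0)) -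
            (D - lam (l + 1) * (x * y)) * (w * z') := by
            rw [e1]; ring
          rw [this]
          refine sub_mem hdiff ?_
          exact mul_mem_pow' (hDl _) (Ideal.mul_mem_left _ _ hz') (by omega))
        have := Ideal.mul_mem_left _ ν h5
        have e9 : (D - lam (l + 1) * (x * y)) * (ν * (w * b')) - y * a 0 -
            x ^ (m + 1) * (ν * (d1 - d0)) = ν * ((D - lam (l + 1) * (x * y)) * (w * b') -
            (lam (l + 1) - lam 0) * (y * a 0) - x ^ (m + 1) * (d1 - d0)) := by
          linear_combination y * a 0 * hν
        rw [e9]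
        exact this
    choose! b hb u t ht e1 hd using key
    have hbm := ih (fun l => lam (l + 1)) b (y * a 0)
      (fun l hl l' hl' hne => hlam _ (by omega) _ (by omega) (by omega)) hb hd
    have ha0 : a 0 ∈ (Ideal.span {x, y}) ^ (m + 1) := by
      obtain ⟨d, hd⟩ := hd 0 (by omega)
      refine h.ydiv (m + 1) (d := - d) ?_
      have : y * a 0 - x ^ (m + 1) * -d = (D - lam (0 + 1) * (x * y)) * b 0 -
        ((D - lam (0 + 1) * (x * y)) * b 0 - y * a 0 - x ^ (m + 1) * d) := by ring
      rw [this]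
      exact sub_mem (mul_mem_pow' (hDl _) (hbm 0 (by omega)) (by omega)) hd
    intro l hl
    cases l with
    | zero => exact ha0
    | succ l =>
      rw [e1 l (by omega)]
      refine add_mem (add_mem ha0 ?_) (ht l (by omega))
      exact mul_mem_pow' hxI (Ideal.mul_mem_left _ _ (hbm l (by omega))) (by omega)

theorem famTwo (s : ℕ) : ∀ (lam e : ℕ → S) (c : S),
    (∀ l ≤ s, RP (x - lam l * y) y) →
    (∀ l ≤ s, ∀ l' ≤ s, l ≠ l' → IsUnit (lam l - lam l')) →
    c ∈ (Ideal.span {x, y}) ^ s →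
    (∀ l ≤ s, c - (x - lam l * y) * e l ∈ (Ideal.span {x, y}) ^ (s + 1)) →
    c ∈ (Ideal.span {x, y}) ^ (s + 1) := by
  have hxI : ∀ l, x - l * y ∈ (Ideal.span {x, y}) ^ 1 := fun l => by
    rw [pow_one, ← span_shift x y l]; exact x_mem _ _
  induction s with
  | zero =>
    intro lam e c _ _ _ h
    have := h 0 le_rfl
    have h2 := add_mem this (mul_mem_pow' (k := 1) (q := 0) (hxI (lam 0)) (by simp : e 0 ∈ _) (by omega))
    simpa using h2
  | succ s ih =>
    intro lam e c hRP hlam hc h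
    have he : ∀ l ≤ s + 1, e l ∈ (Ideal.span {x, y}) ^ s := by
      intro l hl
      have := (hRP l hl).Q1 (s + 1) (z := e l) (by
        rw [span_shift]
        have := sub_mem hc (Ideal.pow_le_pow_right (by omega) (h l hl))
        simpa using this)
      rwa [span_shift, Nat.add_sub_cancel] at this
    have key : ∀ l ≤ s, ∃ e', e (s + 1) - (x - lam l * y) * e' ∈ (Ideal.span {x, y}) ^ (s + 1) := by
      intro l hl
      obtain ⟨ν, hν⟩ := (hlam l (by omega) (s + 1) (by omega) (by omega)).exists_left_inv
      have hd := sub_mem (h l (by omega)) (h (s + 1) le_rfl)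
      rw [← span_shift x y (lam l)] at hd
      obtain ⟨z', hz', e', he'⟩ := (hRP l (by omega)).Q2 1 (s + 1 + 1)
        (z := (lam l - lam (s + 1)) * e (s + 1)) (d := e l - e (s + 1)) (by ring) hd
      rw [span_shift, Nat.add_sub_cancel] at hz'
      refine ⟨ν * e', ?_⟩
      have : e (s + 1) - (x - lam l * y) * (ν * e') = ν * z' := by
        linear_combination ν * he' - e (s + 1) * hν
      rw [this]
      exact Ideal.mul_mem_left _ _ hz'
    choose! e' he' using key
    have h6 := ih lam e' (e (s + 1)) (fun l hl => hRP l (by omega))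
      (fun l hl l' hl' => hlam l (by omega) l' (by omega)) (he _ le_rfl) he'
    have h7 := add_mem (h (s + 1) le_rfl)
      (mul_mem_pow' (k := s + 1 + 1) (hxI (lam (s + 1))) h6 (by omega))
    simpa using h7

theorem RP.interAux (h : RP x y) {D v i : S} (hv : IsUnit v) (hD : D = v * y ^ 2 + x * i)
    (hDI : D ∈ (Ideal.span {x, y}) ^ 2) (j : ℕ) (lam : ℕ → S) (h0 : lam 0 = 0)
    (hlam : ∀ l ≤ 2 * j + 1, ∀ l' ≤ 2 * j + 1, l ≠ l' → IsUnit (lam l - lam l'))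
    (hRP : ∀ l, 1 ≤ l → l ≤ 2 * j + 1 → RP (x - lam l * y) y ∧
      ∃ v', IsUnit v' ∧ ∃ i', D = v' * y ^ 2 + (x - lam l * y) * i')
    {z : S} (hz : z ∈ (Ideal.span {x, y}) ^ (4 * j + 2))
    (h1 : ∀ l ≤ 2 * j + 1, z ∈ Ideal.span {x ^ (2 * j + 2), D ^ j * (D - lam l * (x * y))})
    (h2 : ∀ l, 1 ≤ l → l ≤ 2 * j + 1 →
      z ∈ Ideal.span {D ^ (j + 1), x ^ (2 * j + 1) * (x - lam l * y)}) :
    z ∈ (Ideal.span {x, y}) ^ (4 * j + 3) := by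
  have hxI : x ∈ (Ideal.span {x, y}) ^ 1 := by simpa using x_mem x y
  have hyI : y ∈ (Ideal.span {x, y}) ^ 1 := by simpa using y_mem x y
  have hDj : ∀ j, D ^ j ∈ (Ideal.span {x, y}) ^ (2 * j) := fun j => by
    rw [pow_mul]; exact Ideal.pow_mem_pow hDI j
  have hxj : ∀ j, x ^ j ∈ (Ideal.span {x, y}) ^ j := fun j => Ideal.pow_mem_pow (x_mem x y) j
  have hDl : ∀ l, D - lam l * (x * y) ∈ (Ideal.span {x, y}) ^ 2 := fun l =>
      sub_mem hDI (Ideal.mul_mem_left _ _ (mul_mem_pow' hxI hyI le_rfl))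
  obtain ⟨V, hV, iV, eV⟩ := unit_pow hv hD (j + 1)
  -- family one representation
  have fam1 : ∀ l ≤ 2 * j + 1, ∃ a ∈ (Ideal.span {x, y}) ^ (2 * j),
      ∃ b ∈ (Ideal.span {x, y}) ^ (2 * j),
      z = D ^ j * (D - lam l * (x * y)) * a + x ^ (2 * j + 2) * b := by
    intro l hl
    obtain ⟨b, a, e⟩ := Ideal.mem_span_pair.1 (h1 l hl)
    obtain ⟨a0, ha0, e', ea, hb⟩ := h.degc (2 * (j + 1)) (F := D ^ j * (D - lam l * (x * y)))
      (v := V) (f₁ := iV - lam l * y * D ^ j) hV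
      (by linear_combination eV) (mul_mem_pow' (hDj j) (hDl l) (by omega)) (2 * j + 2) (4 * j + 2)
      (a := a) (b := b) (by
        have : D ^ j * (D - lam l * (x * y)) * a + x ^ (2 * j + 2) * b = z := by rw [← e]; ring
        rwa [this])
    refine ⟨a0, by convert ha0 using 2; omega, _, by convert hb using 2; omega, ?_⟩
    rw [← e, ea]; ring
  choose! a ha b hb e1 using fam1
  have hxD : RP x D := h.ofUnit hv hD
  have ha0 : a 0 ∈ (Ideal.span {x, y}) ^ (2 * j + 1) := by
    refine h.famOne hv hD hDI (2 * j + 1) lam a (D * a 0) hlam ?_ ?_ 0 (by omega)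
    · intro l hl; simpa using ha l hl
    · intro l hl
      obtain ⟨e, he⟩ := hxD.powpow j (2 * j + 2)
        (c := (D - lam l * (x * y)) * a l - D * a 0) (d := b 0 - b l) (by
          have e2 := e1 l hl
          have e3 := e1 0 (by omega)
          rw [h0] at e3
          linear_combination e3 - e2)
      refine ⟨e, ?_⟩
      rw [he]; simp
  have hb0 : b 0 ∈ (Ideal.span {x, y}) ^ (2 * j + 1) := by
    have key : ∀ l ≤ 2 * j, ∃ e, b 0 - (x - lam (l + 1) * y) * e ∈
        (Ideal.span {x, y}) ^ (2 * j + 1) := by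
      intro l hl
      obtain ⟨hR, v', hv', i', hD'⟩ := hRP (l + 1) (by omega) (by omega)
      obtain ⟨V', hV', iV', eV'⟩ := unit_pow hv' hD' (j + 1)
      set x' := x - lam (l + 1) * y with hx'
      obtain ⟨c, d, e⟩ := Ideal.mem_span_pair.1 (h2 (l + 1) (by omega) (by omega))
      obtain ⟨c0, hc0, e', ec, hd⟩ := h.degc (2 * (j + 1)) hV eV (hDj (j + 1)) (2 * j + 1)
        (4 * j + 2) (a := c) (b := x' * d) (by
        have : D ^ (j + 1) * c + x ^ (2 * j + 1) * (x' * d) = z := by rw [← e]; ring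
        rwa [this])
      have hsp : Ideal.span {x', y} = Ideal.span {x, y} := span_shift x y _
      obtain ⟨e2, he2, e3, ee, hd2⟩ := hR.peel (2 * (j + 1)) (4 * j + 2 - (2 * j + 1)) hV' eV'
        (by rw [hsp]; exact hDj (j + 1)) (a := e') (c := d) (by rw [hsp, add_comm (D ^ (j + 1) * e')]; exact hd)
      rw [hsp] at he2 hd2
      -- z = D^(j+1) * C + x^(2j+1) x' E
      set C := c0 + x ^ (2 * j + 1) * e2
      set E := d + D ^ (j + 1) * e3
      have hz2 : z = D ^ (j + 1) * C + x ^ (2 * j + 1) * (x' * E) := by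
        rw [← e, ec, ee]; ring
      have hC : C ∈ (Ideal.span {x, y}) ^ (2 * j) :=
        add_mem (Ideal.pow_le_pow_right (by omega) hc0)
          (mul_mem_pow' (hxj _) he2 (by omega))
      have hz0 := e1 0 (by omega)
      rw [h0] at hz0
      obtain ⟨g, hg⟩ := hxD.powpow (j + 1) (2 * j + 1) (c := a 0 - C)
        (d := x' * E - x * b 0) (by linear_combination hz2 - hz0)
      have hg2 : x' * E - x * b 0 = D ^ (j + 1) * g := by
        have hreg : ∀ m {p q : S}, x ^ m * p = x ^ m * q → p = q := by
          intro m
          induction m with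
          | zero => intro p q; simp
          | succ m ih => intro p q hh; exact ih (h.xcancel (by linear_combination hh))
        apply hreg (2 * j + 1)
        linear_combination hz0 - hz2 + D ^ (j + 1) * hg
      have hmem : x' * E - x * b 0 ∈ (Ideal.span {x', y}) ^ (2 * j + 2) := by
        rw [hg2, hsp]; exact Ideal.mul_mem_right _ _ (hDj (j + 1))
      obtain ⟨z', hz', e4, he4⟩ := hR.Q2 1 (2 * j + 2) (z := - (lam (l + 1) * b 0))
        (d := b 0 - E) (by rw [hx']; ring) hmem
      rw [hsp, show 2 * j + 2 - 1 = 2 * j + 1 by omega] at hz'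
      have hu := hlam (l + 1) (by omega) 0 (by omega) (by omega)
      rw [h0, sub_zero] at hu
      obtain ⟨ν, hν⟩ := hu.exists_left_inv
      refine ⟨-ν * e4, ?_⟩
      have : b 0 - x' * (-ν * e4) = -ν * z' := by
        linear_combination -ν * he4 - b 0 * hν
      rw [this]
      exact Ideal.mul_mem_left _ _ hz'
    choose! e he using key
    exact famTwo (2 * j) (fun l => lam (l + 1)) e (b 0)
      (fun l hl => (hRP (l + 1) (by omega) (by omega)).1)
      (fun l hl l' hl' hne => hlam _ (by omega) _ (by omega) (by omega)) (hb 0 (by omega)) he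
  have := e1 0 (by omega)
  rw [h0] at this
  rw [this]
  refine add_mem (mul_mem_pow' (p := 2 * j + 2) ?_ ha0 (by omega))
    (mul_mem_pow' (hxj (2 * j + 2)) hb0 (by omega))
  rw [zero_mul, sub_zero, ← pow_succ]
  exact hDj (j + 1)

theorem RP.inter (h : RP x y) {D v i : S} (hv : IsUnit v) (hD : D = v * y ^ 2 + x * i)
    (hDI : D ∈ (Ideal.span {x, y}) ^ 2) (j : ℕ) (lam : ℕ → S) (h0 : lam 0 = 0)
    (hlam : ∀ l ≤ 2 * j + 1, ∀ l' ≤ 2 * j + 1, l ≠ l' → IsUnit (lam l - lam l'))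
    (hRP : ∀ l, 1 ≤ l → l ≤ 2 * j + 1 → RP (x - lam l * y) y ∧
      ∃ v', IsUnit v' ∧ ∃ i', D = v' * y ^ 2 + (x - lam l * y) * i')
    {z : S}
    (h1 : ∀ l ≤ 2 * j + 1, z ∈ Ideal.span {x ^ (2 * j + 2), D ^ j * (D - lam l * (x * y))})
    (h2 : ∀ l, 1 ≤ l → l ≤ 2 * j + 1 →
      z ∈ Ideal.span {D ^ (j + 1), x ^ (2 * j + 1) * (x - lam l * y)}) :
    z ∈ (Ideal.span {x, y}) ^ (4 * j + 3) := by
  have hQ : ∀ m k {w : S}, x ^ m * w ∈ (Ideal.span {x, y}) ^ (k + m) →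
      w ∈ (Ideal.span {x, y}) ^ k := by
    intro m
    induction m with
    | zero => intro k w hw; simpa using hw
    | succ m ih =>
      intro k w hw
      apply ih
      have := h.Q1 (k + (m + 1)) (z := x ^ m * w) (by convert hw using 1; ring)
      simpa using this
  have main : ∀ s ≤ 4 * j + 3, z ∈ (Ideal.span {x, y}) ^ s := by
    intro s
    induction s with
    | zero => intro _; simp
    | succ s ih =>
      intro hs
      have hzs := ih (by omega)
      have := h.interAux hv hD hDI j lam h0 hlam hRP (z := x ^ (4 * j + 2 - s) * z)
        (mul_mem_pow' (Ideal.pow_mem_pow (x_mem x y) _) hzs (by omega))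
        (fun l hl => Ideal.mul_mem_left _ _ (h1 l hl))
        (fun l hl hl' => Ideal.mul_mem_left _ _ (h2 l hl hl'))
      refine hQ (4 * j + 2 - s) (s + 1) ?_
      convert this using 2
      omega
  exact main _ le_rfl

end Loc3

section CMpart
variable {R : Type u} [CommRing R]

/-- `P` is an associated prime of `R/K`, elementary form. -/
def AssP (K P : Ideal R) : Prop := P.IsPrime ∧ ∃ u, ∀ r, r ∈ P ↔ r * u ∈ K

/-- `x` is regular modulo `K`. -/
def RegMod (x : R) (K : Ideal R) : Prop := ∀ r, x * r ∈ K → r ∈ K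

theorem assP_iff [IsNoetherianRing R] (K P : Ideal R) :
    P ∈ associatedPrimes R (R ⧸ K) ↔ AssP K P := by
  rw [AssociatedPrimes.mem_iff, isAssociatedPrime_iff]
  refine and_congr_right fun _ => ?_
  constructor
  · rintro ⟨x, rfl⟩
    obtain ⟨u, rfl⟩ := Ideal.Quotient.mk_surjective x
    refine ⟨u, fun r => ?_⟩
    rw [Submodule.mem_colon_singleton, Submodule.mem_bot, ← Ideal.Quotient.eq_zero_iff_mem]
    rfl
  · rintro ⟨u, hu⟩
    refine ⟨Ideal.Quotient.mk K u, ?_⟩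
    ext r
    rw [hu, Submodule.mem_colon_singleton, Submodule.mem_bot, ← Ideal.Quotient.eq_zero_iff_mem]
    rfl

theorem assP_exists [IsNoetherianRing R] {K : Ideal R} {w : R} (hw : w ∉ K) :
    ∃ P, AssP K P ∧ ∀ r, r * w ∈ K → r ∈ P := by
  obtain ⟨P, hP, hle⟩ := exists_le_isAssociatedPrime_of_isNoetherianRing R
    (Ideal.Quotient.mk K w) (by rwa [Ne, Ideal.Quotient.eq_zero_iff_mem])
  refine ⟨P, (assP_iff K P).1 hP, fun r hr => hle ?_⟩
  rw [Submodule.mem_colon_singleton, Submodule.mem_bot]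
  exact Ideal.Quotient.eq_zero_iff_mem.2 hr

theorem assP_finite [IsNoetherianRing R] (K : Ideal R) : {P | AssP K P}.Finite := by
  have := associatedPrimes.finite R (R ⧸ K)
  convert this using 1
  ext P
  exact (assP_iff K P).symm

theorem regMod_of_notMem [IsNoetherianRing R] {K : Ideal R} {x : R} (h : ∀ P, AssP K P → x ∉ P) :
    RegMod x K := by
  intro r hr
  by_contra hrK
  obtain ⟨P, hP, hle⟩ := assP_exists hrK
  exact h P hP (hle x hr)

theorem AssP.le {K P : Ideal R} (h : AssP K P) : K ≤ P := by
  obtain ⟨_, u, hu⟩ := h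
  intro r hr
  exact (hu r).2 (Ideal.mul_mem_right _ _ hr)

theorem exists_reg [IsNoetherianRing R] [IsLocalRing R] (s : Finset (Ideal R))
    (hs : ∀ K ∈ s, ∀ u, (∀ r ∈ maximalIdeal R, r * u ∈ K) → u ∈ K) :
    ∃ z ∈ maximalIdeal R, ∀ K ∈ s, RegMod z K := by
  classical
  have hfin : {P | ∃ K ∈ s, AssP K P}.Finite := by
    have : {P | ∃ K ∈ s, AssP K P} = ⋃ K ∈ s, {P | AssP K P} := by ext; simp
    rw [this]
    exact s.finite_toSet.biUnion fun K _ => assP_finite K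
  by_contra hcon
  push Not at hcon
  have hsub : (maximalIdeal R : Set R) ⊆ ⋃ P ∈ (hfin.toFinset : Set (Ideal R)), (id P : Ideal R) := by
    intro z hz
    obtain ⟨K, hK, hz2⟩ := hcon z hz
    by_contra hz3
    apply hz2
    apply regMod_of_notMem
    intro P hP hzP
    apply hz3
    simp only [Set.mem_iUnion]
    exact ⟨P, by simpa using ⟨K, hK, hP⟩, hzP⟩
  rw [Ideal.subset_union_prime ⊤ ⊤ (fun P hP _ _ => by
    obtain ⟨K, hK, hP⟩ := (Set.Finite.mem_toFinset _).1 hP; exact hP.1)] at hsub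
  obtain ⟨P, hP, hle⟩ := hsub
  obtain ⟨K, hK, hP1, u, hu⟩ := (Set.Finite.mem_toFinset _).1 hP
  have h1 := hs K hK u (fun r hr => (hu r).1 (hle hr))
  exact hP1.ne_top ((Ideal.eq_top_iff_one _).2 ((hu 1).2 (by simpa using h1)))

/-- there is a weakly regular sequence of length `n` on `R/K` -/
def Dp [IsLocalRing R] : ℕ → Ideal R → Prop
  | 0, _ => True
  | n + 1, K => ∃ x ∈ maximalIdeal R, RegMod x K ∧ Dp n (K ⊔ Ideal.span {x})

theorem mem_sup_sing {K : Ideal R} {x r : R} :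
    r ∈ K ⊔ Ideal.span {x} ↔ ∃ k ∈ K, ∃ t, r = k + x * t := by
  rw [Submodule.mem_sup]
  constructor
  · rintro ⟨k, hk, q, hq, rfl⟩
    obtain ⟨t, rfl⟩ := Ideal.mem_span_singleton'.1 hq
    exact ⟨k, hk, t, by ring⟩
  · rintro ⟨k, hk, t, rfl⟩
    exact ⟨k, hk, x * t, Ideal.mem_span_singleton'.2 ⟨t, by ring⟩, rfl⟩

theorem RegMod.swap {K : Ideal R} {x z : R} (hx : RegMod x K) (hz : RegMod z (K ⊔ Ideal.span {x})) :
    RegMod x (K ⊔ Ideal.span {z}) := by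
  intro r hr
  obtain ⟨k, hk, s, e⟩ := mem_sup_sing.1 hr
  obtain ⟨k', hk', t, e'⟩ := mem_sup_sing.1 (hz s (mem_sup_sing.2 ⟨-k, neg_mem hk, r,
    by linear_combination -e⟩))
  refine mem_sup_sing.2 ⟨r - z * t, hx _ ?_, t, by ring⟩
  have : x * (r - z * t) = k + z * k' := by linear_combination e + z * e'
  rw [this]
  exact add_mem hk (Ideal.mul_mem_left _ _ hk')

theorem Dp.exchange [IsNoetherianRing R] [IsLocalRing R] (n : ℕ) :
    ∀ (K : Ideal R) {x y : R}, x ∈ maximalIdeal R → y ∈ maximalIdeal R → RegMod x K → RegMod y K →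
      Dp n (K ⊔ Ideal.span {x}) → Dp n (K ⊔ Ideal.span {y}) := by
  classical
  induction n with
  | zero => intros; trivial
  | succ n ih =>
    rintro K x y hxm hym hx hy ⟨z0, hz0m, hz0, hD⟩
    obtain ⟨z, hzm, hz⟩ := exists_reg {K, K ⊔ Ideal.span {x}, K ⊔ Ideal.span {y}} (by
      intro K' hK' u hu
      simp only [Finset.mem_insert, Finset.mem_singleton] at hK'
      rcases hK' with rfl | rfl | rfl
      · exact hx u (hu x hxm)
      · exact hz0 u (hu z0 hz0m)
      · obtain ⟨k, hk, v, e⟩ := mem_sup_sing.1 (hu x hxm)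
        have hv : v ∈ K ⊔ Ideal.span {x} := by
          apply hz0
          obtain ⟨k', hk', w, e'⟩ := mem_sup_sing.1 (hu z0 hz0m)
          refine mem_sup_sing.2 ⟨z0 * v - x * w, hy _ ?_, w, by ring⟩
          have : y * (z0 * v - x * w) = x * k' - z0 * k := by linear_combination x * e' - z0 * e
          rw [this]
          exact sub_mem (Ideal.mul_mem_left _ _ hk') (Ideal.mul_mem_left _ _ hk)
        obtain ⟨k'', hk'', t, e''⟩ := mem_sup_sing.1 hv
        refine mem_sup_sing.2 ⟨u - y * t, hx _ ?_, t, by ring⟩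
        have : x * (u - y * t) = k + y * k'' := by linear_combination e + y * e''
        rw [this]
        exact add_mem hk (Ideal.mul_mem_left _ _ hk''))
    have hzK := hz K (by simp)
    have hzx := hz (K ⊔ Ideal.span {x}) (by simp)
    have hzy := hz (K ⊔ Ideal.span {y}) (by simp)
    have h1 := ih (K ⊔ Ideal.span {x}) hz0m hzm hz0 hzx hD
    rw [sup_right_comm] at h1
    have h2 := ih (K ⊔ Ideal.span {z}) hxm hym (hx.swap hzx) (hy.swap hzy) h1
    rw [sup_right_comm] at h2
    exact ⟨z, hzm, hzy, h2⟩

theorem Dp.ass [IsNoetherianRing R] [IsLocalRing R] (n : ℕ) :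
    ∀ (K P : Ideal R), Dp n K → AssP K P → (n : WithBot ℕ∞) ≤ ringKrullDim (R ⧸ P) := by
  induction n with
  | zero =>
    intro K P _ hP
    have := hP.1
    exact_mod_cast ringKrullDim_nonneg_of_nontrivial
  | succ n ih =>
    rintro K P ⟨x, hxm, hx, hD⟩ hP
    have hPp := hP.1
    obtain ⟨_, u, hu⟩ := hP
    have huK : u ∉ K := fun h => hPp.ne_top ((Ideal.eq_top_iff_one _).2 ((hu 1).2 (by simpa using h)))
    have hxP : x ∉ P := fun h => huK (hx u ((hu x).1 h))
    let N : Ideal R := Submodule.colon K (P : Set R)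
    have hN : ∀ r, r ∈ N ↔ ∀ p ∈ P, r * p ∈ K := fun r => Submodule.mem_colon
    have hne : ¬ N ≤ K ⊔ Ideal.span {x} := by
      intro hle
      have h1 : N ≤ K ⊔ maximalIdeal R • N := by
        intro r hr
        obtain ⟨k, hk, t, e⟩ := mem_sup_sing.1 (hle hr)
        rw [e]
        refine Submodule.add_mem_sup hk (Submodule.smul_mem_smul hxm ((hN t).2 fun p hp => hx _ ?_))
        have : x * (t * p) = r * p - k * p := by rw [e]; ring
        rw [this]
        exact sub_mem ((hN r).1 hr p hp) (Ideal.mul_mem_right _ _ hk)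
      have h2 := Submodule.le_of_le_smul_of_le_jacobson_bot (IsNoetherian.noetherian N)
        (by rw [IsLocalRing.jacobson_eq_maximalIdeal _ bot_ne_top]) h1
      exact huK (h2 ((hN u).2 fun p hp => by rw [mul_comm]; exact (hu p).1 hp))
    obtain ⟨w, hwN, hw⟩ := SetLike.not_le_iff_exists.1 hne
    obtain ⟨Q, hQ, hQw⟩ := assP_exists hw
    have h1 := ih _ Q hD hQ
    have hxQ : x ∈ Q := hQw x (mem_sup_sing.2 ⟨0, zero_mem _, w, by ring⟩)
    have hPQ : P ≤ Q := fun p hp => hQw p (Ideal.mem_sup_left (by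
      rw [mul_comm]; exact (hN w).1 hwN p hp))
    have h2 := ringKrullDim_succ_le_of_surjective (Ideal.Quotient.factor hPQ)
      (Ideal.Quotient.factor_surjective hPQ) (r := Ideal.Quotient.mk P x)
      (mem_nonZeroDivisors_of_ne_zero (by rwa [Ne, Ideal.Quotient.eq_zero_iff_mem]))
      (by rw [Ideal.Quotient.factor_mk, Ideal.Quotient.eq_zero_iff_mem]; exact hxQ)
    refine le_trans ?_ h2
    push_cast
    gcongr

theorem Dp.step [IsNoetherianRing R] [IsLocalRing R] {n : ℕ} {K : Ideal R} (h : Dp (n + 1) K)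
    {f : R} (hf : f ∈ maximalIdeal R)
    (hd : ringKrullDim (R ⧸ (K ⊔ Ideal.span {f})) ≤ n) :
    RegMod f K ∧ Dp n (K ⊔ Ideal.span {f}) := by
  have hreg : RegMod f K := by
    apply regMod_of_notMem
    intro P hP hfP
    have h1 := h.ass _ _ _ hP
    have hle : K ⊔ Ideal.span {f} ≤ P := sup_le hP.le ((Ideal.span_singleton_le_iff_mem _).2 hfP)
    have h2 := ringKrullDim_le_of_surjective (Ideal.Quotient.factor hle)
      (Ideal.Quotient.factor_surjective hle)
    have := (h1.trans h2).trans hd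
    norm_cast at this
    omega
  obtain ⟨x, hxm, hx, hD⟩ := h
  exact ⟨hreg, hD.exchange n K hxm hf hx hreg⟩

theorem Dp.of_list [IsLocalRing R] (rs : List R) : ∀ K : Ideal R, (∀ x ∈ rs, x ∈ maximalIdeal R) →
    (∀ i (h : i < rs.length), RegMod rs[i] (K ⊔ Ideal.ofList (rs.take i))) → Dp rs.length K := by
  induction rs with
  | nil => intros; trivial
  | cons a l ih =>
    intro K hm hr
    have h0 := hr 0 (by simp)
    simp only [List.take_zero, Ideal.ofList_nil, sup_bot_eq] at h0
    refine ⟨a, hm a (by simp), h0, ih _ (fun x hx => hm x (by simp [hx])) ?_⟩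
    intro i hi
    have := hr (i + 1) (by simpa using hi)
    simpa [sup_assoc] using this

theorem Dp.of_CM [IsNoetherianRing R] [IsLocalRing R] (h : IsCMLocalRing R) :
    ∃ d : ℕ, ringKrullDim R = d ∧ Dp d (⊥ : Ideal R) := by
  have h1 : ringKrullDim R = (mDepth R (R ⧸ (⊥ : Ideal R)) : WithBot ℕ∞) := h
  have h2 : ringKrullDim R < ⊤ := ringKrullDim_lt_top
  rw [h1] at h2
  have h3 : mDepth R (R ⧸ (⊥ : Ideal R)) < ⊤ := WithBot.coe_lt_coe.1 h2
  have hne : Nonempty {n : ℕ∞ | ∃ rs : List R, (∀ x ∈ rs, x ∈ maximalIdeal R) ∧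
    RingTheory.Sequence.IsRegular (R ⧸ (⊥ : Ideal R)) rs ∧ (rs.length : ℕ∞) = n} := by
    by_contra hcon
    rw [nonempty_subtype, not_exists] at hcon
    apply hcon 0
    have : Nontrivial (R ⧸ (⊥ : Ideal R)) := Ideal.Quotient.nontrivial_iff.2 bot_ne_top
    exact ⟨[], by simp, RingTheory.Sequence.IsRegular.nil _ _, rfl⟩
  obtain ⟨rs, hm, hreg, hl⟩ := ENat.sSup_mem_of_nonempty_of_lt_top h3
  refine ⟨rs.length, by rw [h1, mDepth, ← hl]; rfl, Dp.of_list rs ⊥ hm ?_⟩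
  have hw := ((Submodule.quotEquivOfEqBot (⊥ : Ideal R) rfl).isWeaklyRegular_congr rs).1
    hreg.toIsWeaklyRegular
  intro i hi r hr
  have := hw.regular_mod_prev i hi
  have e : (Ideal.ofList (rs.take i) • ⊤ : Ideal R) = Ideal.ofList (rs.take i) := by simp
  rw [e] at this
  rw [bot_sup_eq] at hr ⊢
  have h4 := this (a₁ := Ideal.Quotient.mk _ r) (a₂ := 0) (by
    show rs[i] • _ = rs[i] • _
    rw [smul_zero]
    exact Ideal.Quotient.eq_zero_iff_mem.2 hr)
  exact Ideal.Quotient.eq_zero_iff_mem.1 h4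

theorem height_add_coheight_le [IsLocalRing R] (P : PrimeSpectrum R) :
    ((P.asIdeal.height + Order.coheight P : ℕ∞) : WithBot ℕ∞) ≤ ringKrullDim R := by
  rw [ringKrullDim, Order.krullDim_eq_iSup_height_add_coheight_of_nonempty,
    PrimeSpectrum.height_eq_orderHeight]
  exact WithBot.coe_le_coe.2 (le_iSup (fun a : PrimeSpectrum R => Order.height a + Order.coheight a) P)

theorem dim_quot_le [IsLocalRing R] {d n h : ℕ} (hd : ringKrullDim R = d) (hn : n + h = d)
    (K : Ideal R) (hK : ∀ P : Ideal R, P.IsPrime → K ≤ P → (h : ℕ∞) ≤ P.height) :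
    ringKrullDim (R ⧸ K) ≤ n := by
  rw [ringKrullDim_quotient, Order.krullDim]
  refine iSup_le fun p => ?_
  let q : LTSeries (PrimeSpectrum R) := p.map Subtype.val (fun _ _ h => h)
  have h1 : (p.length : ℕ∞) ≤ Order.coheight q.head := Order.length_le_coheight_head (p := q)
  have h2 := hK q.head.asIdeal q.head.2 p.head.2
  have h3 := height_add_coheight_le q.head
  have h4 : ((h : ℕ∞) + p.length : ℕ∞) ≤ (d : ℕ∞) := by
    rw [hd] at h3
    have h3' : q.head.asIdeal.height + Order.coheight q.head ≤ (d : ℕ∞) := by exact_mod_cast h3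
    exact (add_le_add h2 h1).trans h3'
  have h5 : h + p.length ≤ d := by exact_mod_cast h4
  have : p.length ≤ n := by omega
  exact_mod_cast this

theorem cm_pair [IsNoetherianRing R] [IsLocalRing R] (hCM : IsCMLocalRing R) {f g : R}
    (hf : f ∈ maximalIdeal R) (hg : g ∈ maximalIdeal R)
    (hP : ∀ P : Ideal R, P.IsPrime → f ∈ P → g ∈ P → 2 ≤ P.height) :
    RP f g ∧ ∀ P, AssP (Ideal.span {f, g}) P → P.height ≤ 2 := by
  obtain ⟨d, hd, hD⟩ := Dp.of_CM hCM
  have hd2 : 2 ≤ d := by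
    have h1 := hP (maximalIdeal R) inferInstance hf hg
    have h2 := Ideal.height_le_ringKrullDim_of_ne_top (I := maximalIdeal R) Ideal.IsPrime.ne_top'
    rw [hd] at h2
    have h3 : (maximalIdeal R).height ≤ (d : ℕ∞) := by exact_mod_cast h2
    exact_mod_cast h1.trans h3
  obtain ⟨n, rfl⟩ := Nat.exists_eq_add_of_le' hd2
  have e0 : (⊥ ⊔ Ideal.span {f} : Ideal R) = Ideal.span {f} := bot_sup_eq _
  have e1 : Ideal.span {f} ⊔ Ideal.span {g} = Ideal.span {f, g} := (Ideal.span_insert _ _).symm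
  have hd0 : ringKrullDim (R ⧸ (Ideal.span {f, g})) ≤ n := by
    refine dim_quot_le hd (h := 2) rfl _ fun P hPp hle => ?_
    exact_mod_cast hP P hPp (hle (x_mem f g)) (hle (y_mem f g))
  have hd1 : ringKrullDim (R ⧸ (Ideal.span {f})) ≤ (n + 1 : ℕ) := by
    have hnt : Nontrivial (R ⧸ Ideal.span {f}) := Ideal.Quotient.nontrivial_iff.2
      (fun h => by
        have : (1 : R) ∈ maximalIdeal R := (Ideal.span_singleton_le_iff_mem _).2 hf (h ▸ trivial)
        exact Ideal.IsPrime.ne_top' ((Ideal.eq_top_iff_one _).2 this))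
    have hloc : IsLocalRing (R ⧸ Ideal.span {f}) :=
      IsLocalRing.of_surjective' (Ideal.Quotient.mk _) Ideal.Quotient.mk_surjective
    have := ringKrullDim_le_ringKrullDim_quotient_add_card
      ({Ideal.Quotient.mk (Ideal.span {f}) g} : Finset _) (by
        rw [IsLocalRing.ringJacobson_eq_maximalIdeal]
        intro z hz
        simp only [Finset.coe_singleton, Set.mem_singleton_iff] at hz
        rw [hz]
        have hlh : IsLocalHom (Ideal.Quotient.mk (Ideal.span {f})) :=
          IsLocalHom.of_surjective _ Ideal.Quotient.mk_surjective
        exact (mem_maximalIdeal _).2 (fun hu => hg (isUnit_of_map_unit (Ideal.Quotient.mk (Ideal.span {f})) _ hu)))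
    rw [Finset.coe_singleton] at this
    refine this.trans ?_
    rw [Finset.card_singleton]
    push_cast
    gcongr
    refine le_trans (ringKrullDim_le_of_surjective
      (Ideal.Quotient.lift (Ideal.span {f, g}) ((Ideal.Quotient.mk (Ideal.span
        {Ideal.Quotient.mk (Ideal.span {f}) g})).comp (Ideal.Quotient.mk (Ideal.span {f}))) ?_) ?_)
      hd0
    · intro a ha
      obtain ⟨s, t, rfl⟩ := Ideal.mem_span_pair.1 ha
      rw [RingHom.comp_apply, Ideal.Quotient.eq_zero_iff_mem, map_add, map_mul, map_mul,
        Ideal.Quotient.eq_zero_iff_mem.2 (Ideal.mem_span_singleton_self f), mul_zero, zero_add]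
      exact Ideal.mul_mem_left _ _ (Ideal.mem_span_singleton_self _)
    · exact Ideal.Quotient.lift_surjective_of_surjective _ _
        (Ideal.Quotient.mk_surjective.comp Ideal.Quotient.mk_surjective)
  obtain ⟨hr1, hD1⟩ := hD.step (n := n + 1) hf (by rw [e0]; exact hd1)
  rw [e0] at hD1
  obtain ⟨hr2, hD2⟩ := hD1.step (n := n) hg (by rw [e1]; exact hd0)
  rw [e1] at hD2
  refine ⟨⟨fun c hc => by simpa using hr1 c (by simpa using hc), fun c d e => ?_⟩, fun P hPa => ?_⟩
  · obtain ⟨e', rfl⟩ := Ideal.mem_span_singleton'.1 (hr2 c (Ideal.mem_span_singleton'.2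
      ⟨d, by rw [e]; ring⟩))
    exact ⟨e', by ring⟩
  · have h1 := hD2.ass _ _ _ hPa
    have hPp := hPa.1
    let Q : PrimeSpectrum R := ⟨P, hPp⟩
    have h2 : ringKrullDim (R ⧸ P) = Order.coheight Q := by
      rw [ringKrullDim_quotient, Order.coheight_eq_krullDim_Ici]
      rfl
    have h3 : ((P.height + Order.coheight Q : ℕ∞) : WithBot ℕ∞) ≤ _ := height_add_coheight_le Q
    rw [h2] at h1
    rw [hd] at h3
    have h1' : (n : ℕ∞) ≤ Order.coheight Q := by exact_mod_cast h1
    have h3' : P.height + Order.coheight Q ≤ ((n + 2 : ℕ) : ℕ∞) := WithBot.coe_le_coe.1 h3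
    have h4 := (add_le_add (le_refl P.height) h1').trans h3'
    have h5 : P.height ≠ ⊤ := by
      intro h; rw [h] at h4; simp at h4
    obtain ⟨k, hk⟩ := ENat.ne_top_iff_exists.1 h5
    rw [← hk] at h4 ⊢
    have : k + n ≤ n + 2 := by exact_mod_cast h4
    have : k ≤ 2 := by omega
    exact_mod_cast this

end CMpart

section Redpart
variable {R : Type u} [CommRing R]

theorem red_of_le {J H : Ideal R} (h : J ≤ H) {r : ℕ} (hr : H ^ (r + 1) ≤ J * H ^ r) :
    IsReduction J H :=
  ⟨h, r, le_antisymm hr (by rw [pow_succ']; exact Ideal.mul_mono_left h)⟩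

theorem nak [IsNoetherianRing R] [IsLocalRing R] {A B : Ideal R}
    (h : A ≤ B ⊔ maximalIdeal R * A) : A ≤ B :=
  Submodule.le_of_le_smul_of_le_jacobson_bot (IsNoetherian.noetherian A)
        (by rw [IsLocalRing.jacobson_eq_maximalIdeal _ bot_ne_top]) h

theorem red_pow {J H : Ideal R} {r : ℕ} (hr : H ^ (r + 1) = J * H ^ r) (s : ℕ) :
    H ^ (r + s) = J ^ s * H ^ r := by
  induction s with
  | zero => simp
  | succ s ih =>
    rw [← add_assoc, pow_succ, ih, mul_assoc, ← pow_succ, hr, ← mul_assoc, ← pow_succ]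

theorem le_sing [IsLocalRing R] {f g : R} {J' : Ideal R} (h : J' ≤ Ideal.span {f, g})
    (hne : J' ≠ Ideal.span {f, g}) :
    ∃ e ∈ Ideal.span {f, g}, J' ≤ Ideal.span {e} ⊔ maximalIdeal R * Ideal.span {f, g} := by
  by_cases h0 : J' ≤ maximalIdeal R * Ideal.span {f, g}
  · exact ⟨0, zero_mem _, h0.trans le_sup_right⟩
  wlog H : ∃ a b, IsUnit a ∧ a * f + b * g ∈ J' generalizing f g with key
  · rw [Set.pair_comm] at h hne h0 ⊢
    apply key h hne h0
    obtain ⟨z, hz, hz2⟩ := SetLike.not_le_iff_exists.1 h0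
    obtain ⟨b, a, e⟩ := Ideal.mem_span_pair.1 (h hz)
    by_cases hb : IsUnit b
    · exact ⟨b, a, hb, e ▸ hz⟩
    by_cases ha : IsUnit a
    · exact (H ⟨a, b, ha, by rw [add_comm, e]; exact hz⟩).elim
    · refine (hz2 ?_).elim
      rw [← e]
      exact add_mem (Ideal.mul_mem_mul hb (x_mem _ _)) (Ideal.mul_mem_mul ha (y_mem _ _))
  obtain ⟨a, b, ⟨a, rfl⟩, hab⟩ := H
  have hab' := h hab
  refine ⟨_, hab', fun z hz => ?_⟩
  obtain ⟨c, d, e⟩ := Ideal.mem_span_pair.1 (h hz)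
  have e2 : z = (c * a⁻¹) * (a * f + b * g) + (d - c * a⁻¹ * b) * g := by
    rw [← e]; linear_combination (-c * f) * a.inv_mul
  by_cases hu : IsUnit (d - c * a⁻¹ * b)
  · exfalso
    have hg : g ∈ J' := by
      rw [← Ideal.unit_mul_mem_iff_mem _ hu]
      have : (d - c * a⁻¹ * b) * g = z - (c * a⁻¹) * (a * f + b * g) := by
        linear_combination - e2
      rw [this]
      exact sub_mem hz (Ideal.mul_mem_left _ _ hab)
    have hf : f ∈ J' := by
      rw [← Ideal.unit_mul_mem_iff_mem _ a.isUnit]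
      have : (a : R) * f = (a * f + b * g) - b * g := by ring
      rw [this]
      exact sub_mem hab (Ideal.mul_mem_left _ _ hg)
    apply hne
    refine le_antisymm h (Ideal.span_le.2 ?_)
    rintro w (rfl | rfl)
    exacts [hf, hg]
  · rw [e2]
    exact add_mem (Ideal.mem_sup_left (Ideal.mul_mem_left _ _ (Ideal.mem_span_singleton_self _)))
      (Ideal.mem_sup_right (Ideal.mul_mem_mul hu (y_mem _ _)))

theorem min_of_two [IsNoetherianRing R] [IsLocalRing R] {H : Ideal R} (hH : H ≤ maximalIdeal R)
    (hht : ∀ P : Ideal R, P.IsPrime → H ≤ P → 2 ≤ P.height) {f g : R}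
    (hJ : IsReduction (Ideal.span {f, g}) H) : IsMinimalReduction (Ideal.span {f, g}) H := by
  refine ⟨hJ, fun J' hJ' hle => ?_⟩
  by_contra hne
  obtain ⟨e, he, hle2⟩ := le_sing hle hne
  obtain ⟨_, r, hr⟩ := hJ'
  have heH := hJ.1 he
  have h1 : H ^ (r + 1) ≤ Ideal.span {e} := by
    apply nak
    nth_rewrite 1 [hr]
    refine (Ideal.mul_mono_left hle2).trans ?_
    rw [Ideal.sup_mul, mul_assoc, pow_succ' H]
    exact sup_le_sup Ideal.mul_le_left (Ideal.mul_mono_right (Ideal.mul_mono_left hJ.1))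
  obtain ⟨P, hP, hPm⟩ := Ideal.exists_minimalPrimes_le
    ((Ideal.span_singleton_le_iff_mem (maximalIdeal R)).2 (hH heH))
  have hPp := hP.1.1
  have h2 := Ideal.height_le_one_of_isPrincipal_of_mem_minimalPrimes _ P hP
  have h3 := hht P hPp (hPp.le_of_pow_le (h1.trans hP.1.2))
  have := h3.trans h2
  norm_num at this

/-- `N` is generated by at most `t` elements -/
def Gen (N : Ideal R) (t : ℕ) : Prop := ∃ s : Finset R, s.card ≤ t ∧ Ideal.span (s : Set R) = N

theorem gen_rel [IsLocalRing R] {N : Ideal R} {t : ℕ} (hN : Gen N t) {ι : Type} [Fintype ι]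
    (hι : t < Fintype.card ι) (w : ι → R) (hw : ∀ i, w i ∈ N) :
    ∃ c : ι → R, (∃ i, c i ∉ maximalIdeal R) ∧ ∑ i, c i * w i ∈ maximalIdeal R * N := by
  classical
  obtain ⟨s, hs, rfl⟩ := hN
  have h1 : ∀ i, ∃ A : s → R, w i = ∑ j, A j * j := by
    intro i
    have := hw i
    rw [← Subtype.range_coe (s := (s : Set R))] at this
    obtain ⟨A, hA⟩ := (Ideal.mem_span_range_iff_exists_fun (R := R)).1 this
    exact ⟨A, hA.symm⟩
  choose A hA using h1
  have h2 : ¬ LinearIndependent (ResidueField R) (fun i => fun j : s => residue R (A i j)) := by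
    intro h
    have := h.fintype_card_le_finrank
    rw [Module.finrank_fintype_fun_eq_card, Fintype.card_coe] at this
    omega
  rw [Fintype.not_linearIndependent_iff] at h2
  obtain ⟨g, hg, i0, hi0⟩ := h2
  choose c hc using fun i => residue_surjective (g i)
  refine ⟨c, ⟨i0, fun h => hi0 ?_⟩, ?_⟩
  · rw [← hc]; exact (residue_eq_zero_iff _).2 h
  · have : ∑ i, c i * w i = ∑ j : s, (∑ i, c i * A i j) * j := by
      simp_rw [hA, Finset.mul_sum, Finset.sum_mul]
      rw [Finset.sum_comm]
      simp_rw [mul_assoc]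
    rw [this]
    refine sum_mem fun j _ => Ideal.mul_mem_mul ?_ (Ideal.subset_span j.2)
    rw [← residue_eq_zero_iff]
    have := congrFun hg j
    simp only [Finset.sum_apply, Pi.smul_apply, smul_eq_mul, Pi.zero_apply] at this
    rw [map_sum, ← this]
    simp [hc]

theorem pair_pow_succ (p q : R) (k : ℕ) : Ideal.span {p, q} ^ (k + 1) =
    Ideal.span {p} * Ideal.span {p, q} ^ k ⊔ Ideal.span {q ^ (k + 1)} := by
  apply le_antisymm
  · intro z hz
    obtain ⟨a, ha, c, hc⟩ := pow_split p q (k + 1) hz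
    rw [Nat.add_sub_cancel] at ha
    have h1 : p * a ∈ Ideal.span {p} * Ideal.span {p, q} ^ k :=
      Ideal.mul_mem_mul (Ideal.mem_span_singleton_self _) ha
    have h2 : c * q ^ (k + 1) ∈ Ideal.span {q ^ (k + 1)} :=
      Ideal.mul_mem_left _ _ (Ideal.mem_span_singleton_self _)
    rw [hc]
    exact Submodule.add_mem_sup h1 h2
  · refine sup_le ?_ ((Ideal.span_singleton_le_iff_mem _).2 (Ideal.pow_mem_pow (y_mem _ _) _))
    rw [pow_succ']
    exact Ideal.mul_mono_left ((Ideal.span_singleton_le_iff_mem _).2 (x_mem _ _))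

theorem span_mul_fin (a : R) (s : Set R) :
    Ideal.span {a} * Ideal.span s = Ideal.span ((fun z => a * z) '' s) := by
  rw [Ideal.span_mul_span', Set.singleton_mul]

theorem Gen.pair {L : Ideal R} {t : ℕ} (hL : Gen L t) (p q : R) (k : ℕ) :
    Gen (Ideal.span {p, q} ^ k * L) ((k + 1) * t) := by
  classical
  induction k with
  | zero => rw [pow_zero, Ideal.one_eq_top, Ideal.top_mul, zero_add, one_mul]; exact hL
  | succ k ih =>
    obtain ⟨s, hs, e⟩ := hL
    obtain ⟨s', hs', e'⟩ := ih
    refine ⟨s'.image (fun z => p * z) ∪ s.image (fun z => q ^ (k + 1) * z), ?_, ?_⟩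
    · refine (Finset.card_union_le _ _).trans ?_
      have h1 := Finset.card_image_le (s := s') (f := fun z => p * z)
      have h2 := Finset.card_image_le (s := s) (f := fun z => q ^ (k + 1) * z)
      have : (k + 1 + 1) * t = (k + 1) * t + t := by ring
      omega
    · rw [pair_pow_succ, Ideal.sup_mul, mul_assoc, ← e', ← e, span_mul_fin, span_mul_fin,
        Finset.coe_union, Finset.coe_image, Finset.coe_image, Ideal.span_union]

theorem poly_ne [IsLocalRing R] [Infinite (ResidueField R)] {M : ℕ}
    (c : Fin M → ResidueField R) (hc : ∃ i, c i ≠ 0) :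
    ∃ x, ∑ i, c i * x ^ (i : ℕ) ≠ 0 := by
  by_contra hcon
  push Not at hcon
  let f : Polynomial (ResidueField R) := ∑ i, Polynomial.C (c i) * Polynomial.X ^ (i : ℕ)
  have hf : f = 0 := by
    apply Polynomial.funext
    intro x
    simpa [f, Polynomial.eval_finsetSum] using hcon x
  obtain ⟨i, hi⟩ := hc
  apply hi
  have := congrArg (fun p => Polynomial.coeff p (i : ℕ)) hf
  simpa [f, Polynomial.finsetSum_coeff, Polynomial.coeff_C_mul, Polynomial.coeff_X_pow,
    Fin.val_inj] using this

theorem poly_unit [IsLocalRing R] [Infinite (ResidueField R)] {M : ℕ}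
    (c : Fin M × Fin M → R) (hc : ∃ i, c i ∉ maximalIdeal R) :
    ∃ x y : R, IsUnit (∑ i, c i * (x ^ (i.1 : ℕ) * y ^ (i.2 : ℕ))) := by
  obtain ⟨⟨a, b⟩, hab⟩ := hc
  obtain ⟨y, hy⟩ := poly_ne (fun b => residue R (c (a, b))) ⟨b, fun h => hab
    ((residue_eq_zero_iff _).1 h)⟩
  obtain ⟨x, hx⟩ := poly_ne (fun a => ∑ b, residue R (c (a, b)) * y ^ (b : ℕ)) ⟨a, hy⟩
  obtain ⟨x, rfl⟩ := residue_surjective x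
  obtain ⟨y, rfl⟩ := residue_surjective y
  refine ⟨x, y, ?_⟩
  rw [← residue_ne_zero_iff_isUnit]
  convert hx using 1
  rw [Fintype.sum_prod_type, map_sum]
  refine Finset.sum_congr rfl fun a _ => ?_
  rw [map_sum, Finset.sum_mul]
  refine Finset.sum_congr rfl fun b _ => ?_
  simp only [map_mul, map_pow]
  ring

theorem elim_pow {J' H : Ideal R} {f h l : R} (hf : f ∈ H) (hh : h ∈ H) (hfl : f - l * h ∈ J')
    (a : ℕ) : ∀ (q : ℕ) (w : R), w ∈ H ^ q →
      f ^ a * w - l ^ a * (h ^ a * w) ∈ J' * H ^ (a + q - 1) := by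
  induction a with
  | zero => intro q w hw; simp
  | succ a ih =>
    intro q w hw
    have h1 := ih (q + 1) (f * w) (by rw [pow_succ']; exact Ideal.mul_mem_mul hf hw)
    have h2 : (f - l * h) * (l ^ a * (h ^ a * w)) ∈ J' * H ^ (a + q) := by
      refine Ideal.mul_mem_mul hfl (Ideal.mul_mem_left _ _ ?_)
      rw [pow_add]
      exact Ideal.mul_mem_mul (Ideal.pow_mem_pow hh _) hw
    have e1 : a + (q + 1) - 1 = a + q := by omega
    have e2 : a + 1 + q - 1 = a + q := by omega
    rw [e1] at h1
    rw [e2]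
    convert add_mem h1 h2 using 1
    ring

theorem sup_sing_pow {A H : Ideal R} {h : R} (hA : A ≤ H) (hh : h ∈ H) (D : ℕ) :
    (A ⊔ Ideal.span {h}) ^ (D + 1) ≤ A * H ^ D ⊔ Ideal.span {h ^ (D + 1)} := by
  have hle : A ⊔ Ideal.span {h} ≤ H := sup_le hA ((Ideal.span_singleton_le_iff_mem _).2 hh)
  induction D with
  | zero => simp
  | succ D ih =>
    rw [pow_succ]
    refine (Ideal.mul_mono_left ih).trans ?_
    rw [Ideal.sup_mul, Ideal.mul_sup (Ideal.span _)]
    refine sup_le ?_ (sup_le ?_ ?_)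
    · refine le_sup_of_le_left ?_
      rw [mul_assoc, pow_succ]
      exact Ideal.mul_mono_right (Ideal.mul_mono_right hle)
    · refine le_sup_of_le_left ?_
      rw [mul_comm]
      exact Ideal.mul_mono_right ((Ideal.span_singleton_le_iff_mem _).2 (Ideal.pow_mem_pow hh _))
    · refine le_sup_of_le_right ?_
      rw [Ideal.span_singleton_mul_span_singleton, ← pow_succ]

theorem elim_one [IsNoetherianRing R] [IsLocalRing R] [Infinite (ResidueField R)] {H : Ideal R}
    {p q : R} (h0 : IsReduction (Ideal.span {p, q}) H) {f g h : R} {A : Ideal R}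
    (hJ : IsReduction (Ideal.span {f, g} ⊔ (Ideal.span {h} ⊔ A)) H) :
    ∃ x y : R, IsReduction (Ideal.span {f - x * h, g - y * h} ⊔ A) H := by
  obtain ⟨h0H, r0, hr0⟩ := h0
  obtain ⟨hJH, r, hr⟩ := hJ
  obtain ⟨s, hs⟩ := (IsNoetherian.noetherian (H ^ r0) : (H ^ r0).FG)
  have hfH : f ∈ H := hJH (Ideal.mem_sup_left (x_mem _ _))
  have hgH : g ∈ H := hJH (Ideal.mem_sup_left (y_mem _ _))
  have hhH : h ∈ H := hJH (Ideal.mem_sup_right (Ideal.mem_sup_left (Ideal.mem_span_singleton_self _)))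
  have hAH : A ≤ H := fun a ha => hJH (Ideal.mem_sup_right (Ideal.mem_sup_right ha))
  set μ := s.card with hμ
  let M := 3 * μ + r0 + 1
  obtain ⟨k, hk⟩ : ∃ k, 2 * M = r0 + k := ⟨2 * M - r0, by omega⟩
  have hgen : Gen (H ^ (2 * M)) ((k + 1) * μ) := by
    rw [hk, red_pow hr0]
    exact Gen.pair ⟨s, le_rfl, hs⟩ p q k
  have hcard : (k + 1) * μ < Fintype.card (Fin M × Fin M) := by
    rw [Fintype.card_prod, Fintype.card_fin]
    have : k + 1 ≤ 2 * M + 1 := by omega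
    have h3 : 3 * μ < M := by omega
    nlinarith
  have hdeg : ∀ i : Fin M × Fin M, (i.1 : ℕ) + i.2 + (2 * M - i.1 - i.2) = 2 * M := by
    intro i; have := i.1.2; have := i.2.2; omega
  obtain ⟨c, hc, hsum⟩ := gen_rel hgen hcard
    (fun i => f ^ (i.1 : ℕ) * (g ^ (i.2 : ℕ) * h ^ (2 * M - i.1 - i.2))) (fun i => by
      have := Ideal.mul_mem_mul (Ideal.pow_mem_pow hfH i.1)
        (Ideal.mul_mem_mul (Ideal.pow_mem_pow hgH i.2) (Ideal.pow_mem_pow hhH (2 * M - i.1 - i.2)))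
      rwa [← pow_add, ← pow_add, ← add_assoc, hdeg i] at this)
  obtain ⟨x, y, hu⟩ := poly_unit c hc
  refine ⟨x, y, ?_⟩
  set J' := Ideal.span {f - x * h, g - y * h} ⊔ A with hJ'
  have hxJ : f - x * h ∈ J' := Ideal.mem_sup_left (x_mem _ _)
  have hyJ : g - y * h ∈ J' := Ideal.mem_sup_left (y_mem _ _)
  have hJ'H : J' ≤ H := by
    refine sup_le (Ideal.span_le.2 ?_) hAH
    rintro w (rfl | rfl)
    · exact sub_mem hfH (Ideal.mul_mem_left _ _ hhH)
    · exact sub_mem hgH (Ideal.mul_mem_left _ _ hhH)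
  have hterm : ∀ i : Fin M × Fin M,
      f ^ (i.1 : ℕ) * (g ^ (i.2 : ℕ) * h ^ (2 * M - i.1 - i.2)) -
        (x ^ (i.1 : ℕ) * y ^ (i.2 : ℕ)) * h ^ (2 * M) ∈ J' * H ^ (2 * M - 1) := by
    intro i
    have h1 := elim_pow hfH hhH hxJ i.1 (i.2 + (2 * M - i.1 - i.2))
      (g ^ (i.2 : ℕ) * h ^ (2 * M - i.1 - i.2)) (by
        rw [pow_add]
        exact Ideal.mul_mem_mul (Ideal.pow_mem_pow hgH _) (Ideal.pow_mem_pow hhH _))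
    have h2 := elim_pow hgH hhH hyJ i.2 (i.1 + (2 * M - i.1 - i.2))
      (h ^ (i.1 : ℕ) * h ^ (2 * M - i.1 - i.2)) (by
        rw [pow_add]
        exact Ideal.mul_mem_mul (Ideal.pow_mem_pow hhH _) (Ideal.pow_mem_pow hhH _))
    have e1 : (i.1 : ℕ) + (i.2 + (2 * M - i.1 - i.2)) - 1 = 2 * M - 1 := by
      have := hdeg i; omega
    have e2 : (i.2 : ℕ) + (i.1 + (2 * M - i.1 - i.2)) - 1 = 2 * M - 1 := by
      have := hdeg i; omega
    rw [e1] at h1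
    rw [e2] at h2
    have e3 : h ^ (2 * M) = h ^ (i.1 : ℕ) * h ^ (i.2 : ℕ) * h ^ (2 * M - i.1 - i.2) := by
      rw [← pow_add, ← pow_add, hdeg i]
    rw [e3]
    convert add_mem h1 (Ideal.mul_mem_left _ (x ^ (i.1 : ℕ)) h2) using 1
    ring
  have hhD : h ^ (2 * M) ∈ J' * H ^ (2 * M - 1) ⊔ maximalIdeal R * H ^ (2 * M) := by
    rw [← Ideal.unit_mul_mem_iff_mem _ hu, Finset.sum_mul]
    have h3 : ∑ i, c i * (f ^ (i.1 : ℕ) * (g ^ (i.2 : ℕ) * h ^ (2 * M - i.1 - i.2)) -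
        (x ^ (i.1 : ℕ) * y ^ (i.2 : ℕ)) * h ^ (2 * M)) ∈ J' * H ^ (2 * M - 1) :=
      sum_mem fun i _ => Ideal.mul_mem_left _ _ (hterm i)
    have h4 := sub_mem (Ideal.mem_sup_right (S := J' * H ^ (2 * M - 1)) hsum) (Ideal.mem_sup_left h3)
    rw [← Finset.sum_sub_distrib] at h4
    convert h4 using 1
    refine Finset.sum_congr rfl fun i _ => ?_
    ring
  have hJle : Ideal.span {f, g} ⊔ (Ideal.span {h} ⊔ A) ≤ J' ⊔ Ideal.span {h} := by
    refine sup_le (Ideal.span_le.2 ?_) (sup_le le_sup_right (le_sup_of_le_left le_sup_right))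
    have hhm : h ∈ J' ⊔ Ideal.span {h} := Ideal.mem_sup_right (Ideal.mem_span_singleton_self _)
    rintro w (rfl | rfl)
    · have := add_mem (Ideal.mem_sup_left (T := Ideal.span {h}) hxJ) (Ideal.mul_mem_left _ x hhm)
      simpa using this
    · have := add_mem (Ideal.mem_sup_left (T := Ideal.span {h}) hyJ) (Ideal.mul_mem_left _ y hhm)
      simpa using this
  obtain ⟨D, hD⟩ : ∃ D, 2 * M = D + 1 := ⟨2 * M - 1, by omega⟩
  rw [hD, Nat.add_sub_cancel] at hhD
  have hpow : (Ideal.span {f, g} ⊔ (Ideal.span {h} ⊔ A)) ^ (D + 1) ≤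
      J' * H ^ D ⊔ maximalIdeal R * H ^ (D + 1) := by
    refine (Ideal.pow_right_mono hJle _).trans ((sup_sing_pow hJ'H hhH D).trans ?_)
    exact sup_le le_sup_left ((Ideal.span_singleton_le_iff_mem _).2 hhD)
  apply red_of_le hJ'H (r := r + D)
  apply nak
  have e := red_pow hr (D + 1)
  rw [add_assoc, e]
  refine (Ideal.mul_mono_left hpow).trans ?_
  rw [Ideal.sup_mul, mul_assoc, mul_assoc, ← pow_add, ← pow_add, ← e, add_comm D r,
    show D + 1 + r = r + (D + 1) by ring]

theorem elim_all [IsNoetherianRing R] [IsLocalRing R] [Infinite (ResidueField R)] {H : Ideal R}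
    {p q : R} (h0 : IsReduction (Ideal.span {p, q}) H) (l : List R) : ∀ f g : R,
    IsReduction (Ideal.span {f, g} ⊔ Ideal.ofList l) H →
    ∃ f' g' : R, IsReduction (Ideal.span {f', g'}) H ∧
      Ideal.span {f', g'} ≤ Ideal.span {f, g} ⊔ Ideal.ofList l := by
  induction l with
  | nil => intro f g h; rw [Ideal.ofList_nil, sup_bot_eq] at h ⊢; exact ⟨f, g, h, le_rfl⟩
  | cons a l ih =>
    intro f g h
    rw [Ideal.ofList_cons] at h ⊢
    obtain ⟨x, y, hxy⟩ := elim_one h0 h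
    obtain ⟨f', g', h1, h2⟩ := ih _ _ hxy
    refine ⟨f', g', h1, h2.trans ?_⟩
    refine sup_le (Ideal.span_le.2 ?_) (le_sup_of_le_right le_sup_right)
    have ham : a ∈ Ideal.span {f, g} ⊔ (Ideal.span {a} ⊔ Ideal.ofList l) :=
      Ideal.mem_sup_right (Ideal.mem_sup_left (Ideal.mem_span_singleton_self _))
    rintro w (rfl | rfl)
    · exact sub_mem (Ideal.mem_sup_left (x_mem _ _)) (Ideal.mul_mem_left _ _ ham)
    · exact sub_mem (Ideal.mem_sup_left (y_mem _ _)) (Ideal.mul_mem_left _ _ ham)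

theorem two_of_min [IsNoetherianRing R] [IsLocalRing R] [Infinite (ResidueField R)] {H : Ideal R}
    {p q : R} (h0 : IsReduction (Ideal.span {p, q}) H) {J : Ideal R}
    (hJ : IsMinimalReduction J H) : ∃ f g, J = Ideal.span {f, g} := by
  obtain ⟨s, hs⟩ := (IsNoetherian.noetherian J : J.FG)
  have e : Ideal.span {0, 0} ⊔ Ideal.ofList s.toList = J := by
    rw [← hs]
    simp [Ideal.ofList, Ideal.submodule_span_eq]
  obtain ⟨f, g, h1, h2⟩ := elim_all h0 s.toList 0 0 (by rw [e]; exact hJ.1)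
  rw [e] at h2
  exact ⟨f, g, (hJ.2 _ h1 h2).symm⟩

end Redpart

section Struct
variable {S : Type u} [CommRing S]

theorem mem_pair {f g z : S} : z ∈ Ideal.span {f, g} ↔ ∃ a b, z = a * f + b * g := by
  rw [Ideal.mem_span_pair]
  exact ⟨fun ⟨a, b, h⟩ => ⟨a, b, h.symm⟩, fun ⟨a, b, h⟩ => ⟨a, b, h.symm⟩⟩

theorem link_det {x y a b c d D A z : S} (h : RP x y) (hDA : RP A D) (hD : D = a * x + b * y)
    (hA : A = c * x + d * y) (hzx : z * x ∈ Ideal.span {D, A}) (hzy : z * y ∈ Ideal.span {D, A}) :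
    ∃ e v w, z = e * (a * d - b * c) + v * D + w * A := by
  obtain ⟨r, s, e1⟩ := mem_pair.1 hzx
  obtain ⟨r', s', e2⟩ := mem_pair.1 hzy
  obtain ⟨e, he⟩ := hDA.hy (y * r - x * r') (x * s' - y * s) (by linear_combination -y * e1 + x * e2)
  have he2 : x * s' - y * s = e * D := by
    have := hDA.hx (x * s' - y * s - e * D) (by linear_combination y * e1 - x * e2 + D * he)
    linear_combination this
  obtain ⟨v, hv⟩ := h.hy (r - e * d) (r' + e * c) (by
    linear_combination he + e * hA)
  obtain ⟨w, hw⟩ := h.hy (s + e * b) (s' - e * a) (by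
    linear_combination -he2 - e * hD)
  refine ⟨e, v, w, ?_⟩
  have := h.hx (z - (e * (a * d - b * c) + v * D + w * A)) (by
    linear_combination e1 + D * hv + A * hw + e * d * hD - e * b * hA)
  linear_combination this

theorem fg_pair (x y : S) : (Ideal.span {x, y}).FG := by
  classical
  exact ⟨{x, y}, by simp⟩

theorem exists_y [IsLocalRing S] {x y D A : S} (h : RP x y) (hx : x ∈ maximalIdeal S)
    (hy : y ∈ maximalIdeal S) (hDA : RP A D) (hD : D ∈ Ideal.span {x, y} ^ 2)
    (hA : A ∈ Ideal.span {x, y})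
    (hl : ∀ z ∈ Ideal.span {x, y}, ∀ z' ∈ Ideal.span {x, y}, z * z' ∈ Ideal.span {D, A}) :
    ∃ t, Ideal.span {x, y} = Ideal.span {A, t} := by
  obtain ⟨c, d, hA'⟩ := mem_pair.1 hA
  have hle : Ideal.span {x, y} ≤ maximalIdeal S := Ideal.span_le.2 (by
    rintro w (rfl | rfl); exacts [hx, hy])
  rw [pow_two] at hD
  obtain ⟨a, ha, b, hb, hD'⟩ := mem_pair_mul.1 hD
  by_cases hc : IsUnit c
  · obtain ⟨c, rfl⟩ := hc
    refine ⟨y, le_antisymm (Ideal.span_le.2 ?_) (Ideal.span_le.2 ?_)⟩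
    · rintro w (rfl | rfl)
      · exact mem_pair.2 ⟨↑c⁻¹, -(↑c⁻¹ * d), by rw [hA']; linear_combination -w * c.inv_mul⟩
      · exact y_mem _ _
    · rintro w (rfl | rfl)
      exacts [hA, y_mem _ _]
  by_cases hd : IsUnit d
  · obtain ⟨d, rfl⟩ := hd
    refine ⟨x, le_antisymm (Ideal.span_le.2 ?_) (Ideal.span_le.2 ?_)⟩
    · rintro w (rfl | rfl)
      · exact y_mem _ _
      · exact mem_pair.2 ⟨↑d⁻¹, -(↑d⁻¹ * c), by rw [hA']; linear_combination -w * d.inv_mul⟩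
    · rintro w (rfl | rfl)
      exacts [hA, x_mem _ _]
  exfalso
  have h1 : Ideal.span {x, y} ≤ ⊥ ⊔ maximalIdeal S * Ideal.span {x, y} := by
    rw [bot_sup_eq]
    intro z hz
    obtain ⟨e, v, w, rfl⟩ := link_det h hDA hD' hA' (hl z hz x (x_mem _ _)) (hl z hz y (y_mem _ _))
    have hcm : c ∈ maximalIdeal S := hc
    have hdm : d ∈ maximalIdeal S := hd
    refine add_mem (add_mem (Ideal.mul_mem_left _ _ (sub_mem ?_ ?_)) (Ideal.mul_mem_left _ _ ?_))
      (Ideal.mul_mem_left _ _ ?_)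
    · rw [mul_comm a d]; exact Ideal.mul_mem_mul hdm ha
    · rw [mul_comm b c]; exact Ideal.mul_mem_mul hcm hb
    · exact Ideal.mul_mono_left hle hD
    · rw [hA']
      exact add_mem (Ideal.mul_mem_mul hcm (x_mem _ _)) (Ideal.mul_mem_mul hdm (y_mem _ _))
  have h2 : Ideal.span {x, y} ≤ ⊥ := Submodule.le_of_le_smul_of_le_jacobson_bot (fg_pair x y)
        (by rw [IsLocalRing.jacobson_eq_maximalIdeal _ bot_ne_top]) h1
  have hx0 : x = 0 := by simpa using h2 (x_mem x y)
  exact one_ne_zero (h.hx 1 (by rw [hx0, zero_mul]))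

theorem struct_of_y [IsLocalRing S] {D A t : S} (hAm : A ∈ maximalIdeal S)
    (hDA : RP A D) (hD : D ∈ Ideal.span {A, t} ^ 2)
    (hl : ∀ z ∈ Ideal.span {A, t}, ∀ z' ∈ Ideal.span {A, t}, z * z' ∈ Ideal.span {D, A}) :
    RP A t ∧ ∃ w, IsUnit w ∧ ∃ i ∈ Ideal.span {A, t}, D = w * t ^ 2 + A * i := by
  obtain ⟨i, hi, w, e⟩ := pow_split _ _ _ hD
  rw [Nat.add_one_sub_one, pow_one] at hi
  have hRP : RP A t := by
    refine ⟨hDA.hx, fun c d hcd => hDA.hy c (w * t * d + i * c) ?_⟩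
    rw [e]; linear_combination w * t * hcd
  refine ⟨hRP, w, ?_, i, hi, by rw [e]; ring⟩
  obtain ⟨e', v, w', h'⟩ := link_det (a := i) (b := w * t) (c := 1) (d := 0) hRP hDA
    (by rw [e]; ring) (by ring) (hl t (y_mem _ _) A (x_mem _ _)) (hl t (y_mem _ _) t (y_mem _ _))
  obtain ⟨q, hq⟩ := hRP.hy (1 + e' * w - v * w * t) (v * i + w') (by
    linear_combination h' + v * e)
  by_contra hw
  have hwm : w ∈ maximalIdeal S := hw
  apply Ideal.IsPrime.ne_top' (I := maximalIdeal S)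
  rw [Ideal.eq_top_iff_one]
  have : (1 : S) = A * q - e' * w + v * t * w := by linear_combination hq
  rw [this]
  exact add_mem (sub_mem (Ideal.mul_mem_right _ _ hAm) (Ideal.mul_mem_left _ _ hwm))
    (Ideal.mul_mem_left _ _ hwm)

theorem RP.of_regular {x y : S} (h : RingTheory.Sequence.IsRegular S [x, y]) : RP x y := by
  have hw := h.toIsWeaklyRegular
  have key : ∀ i (hi : i < [x, y].length) r, [x, y][i] * r ∈ Ideal.ofList ([x, y].take i) →
      r ∈ Ideal.ofList ([x, y].take i) := by
    intro i hi r hr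
    have := hw.regular_mod_prev i hi
    have e : (Ideal.ofList ([x, y].take i) • ⊤ : Ideal S) = Ideal.ofList ([x, y].take i) := by simp
    rw [e] at this
    have h4 := this (a₁ := Ideal.Quotient.mk _ r) (a₂ := 0) (by
      show [x, y][i] • _ = [x, y][i] • _
      rw [smul_zero]
      exact Ideal.Quotient.eq_zero_iff_mem.2 hr)
    exact Ideal.Quotient.eq_zero_iff_mem.1 h4
  constructor
  · intro c hc
    have := key 0 (by simp) c (by simpa using hc)
    simpa using this
  · intro c d e
    have := key 1 (by simp) c (by
      have : y * c ∈ Ideal.span {x} := Ideal.mem_span_singleton'.2 ⟨d, by rw [e]; ring⟩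
      simpa using this)
    have : c ∈ Ideal.span {x} := by simpa using this
    obtain ⟨t, ht⟩ := Ideal.mem_span_singleton'.1 this
    exact ⟨t, by rw [← ht]; ring⟩

theorem RP.pow {x y : S} (h : RP x y) (n : ℕ) : RP x (y ^ n) :=
  ⟨h.hx, fun _ _ e => h.ypow n e⟩

end Struct

section Loc
variable {R : Type u} [CommRing R]

theorem mem_loc (p : Ideal R) [p.IsPrime] (Q : Ideal R) (z : R) :
    algebraMap R (Localization.AtPrime p) z ∈ Q.map (algebraMap R (Localization.AtPrime p)) ↔
      ∃ w ∉ p, w * z ∈ Q :=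
  IsLocalization.algebraMap_mem_map_algebraMap_iff p.primeCompl _ Q z

theorem RP.loc (p : Ideal R) [p.IsPrime] {f g : R} (h : RP f g) :
    RP (algebraMap R (Localization.AtPrime p) f) (algebraMap R (Localization.AtPrime p) g) := by
  have hex : ∀ (w : R), w ∉ p → IsUnit (algebraMap R (Localization.AtPrime p) w) := fun w hw =>
    IsLocalization.map_units (M := p.primeCompl) _ ⟨w, hw⟩
  constructor
  · intro c hc
    obtain ⟨⟨a, s⟩, e⟩ := IsLocalization.surj p.primeCompl c
    simp only at e
    have h1 : algebraMap R (Localization.AtPrime p) (f * a) = algebraMap R _ 0 := by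
      rw [map_mul, ← e, ← mul_assoc, hc, zero_mul, map_zero]
    obtain ⟨w, hw⟩ := (IsLocalization.eq_iff_exists p.primeCompl _).1 h1
    have h2 := h.hx (w * a) (by linear_combination hw)
    have h3 : algebraMap R (Localization.AtPrime p) (w * a) = 0 := by rw [h2, map_zero]
    rw [map_mul, ← e] at h3
    have := (hex w w.2).mul_right_eq_zero.1 h3
    exact (hex s s.2).mul_left_eq_zero.1 this
  · intro c d hcd
    obtain ⟨⟨a, s⟩, e⟩ := IsLocalization.surj p.primeCompl c
    obtain ⟨⟨b, t⟩, e'⟩ := IsLocalization.surj p.primeCompl d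
    simp only at e e'
    have h1 : algebraMap R (Localization.AtPrime p) (g * (a * t)) = algebraMap R _ (f * (b * s)) := by
      simp only [map_mul]
      rw [← e, ← e']
      linear_combination (algebraMap R (Localization.AtPrime p) s) * (algebraMap R _ t) * hcd
    obtain ⟨w, hw⟩ := (IsLocalization.eq_iff_exists p.primeCompl _).1 h1
    obtain ⟨q, hq⟩ := h.hy (w * (a * t)) (w * (b * s)) (by linear_combination hw)
    have h3 := congrArg (algebraMap R (Localization.AtPrime p)) hq
    simp only [map_mul] at h3
    rw [← e] at h3
    obtain ⟨w', hw'⟩ := hex w w.2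
    obtain ⟨s', hs'⟩ := hex s s.2
    obtain ⟨t', ht'⟩ := hex t t.2
    rw [← hw', ← hs', ← ht'] at h3
    refine ⟨(w'⁻¹ : (Localization.AtPrime p)ˣ) * (s'⁻¹ : (Localization.AtPrime p)ˣ) *
      (t'⁻¹ : (Localization.AtPrime p)ˣ) * algebraMap R _ q, ?_⟩
    rw [← (w' * s' * t').isUnit.mul_right_inj]
    have e1 := w'.mul_inv
    have e2 := s'.mul_inv
    have e3 := t'.mul_inv
    push_cast
    calc (w' : Localization.AtPrime p) * s' * t' * c = w' * (c * s' * t') := by ring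
      _ = algebraMap R _ f * algebraMap R _ q := h3
      _ = algebraMap R _ f * algebraMap R _ q * (w' * (w'⁻¹ : (Localization.AtPrime p)ˣ)) *
          (s' * (s'⁻¹ : (Localization.AtPrime p)ˣ)) * (t' * (t'⁻¹ : (Localization.AtPrime p)ˣ)) := by
        rw [e1, e2, e3]; ring
      _ = _ := by ring

end Loc


section CtxPart
variable {R : Type u} [CommRing R] [IsNoetherianRing R] [IsLocalRing R]

/-- `Q` is saturated with respect to the minimal primes of `I`. -/
def Sat (I Q : Ideal R) : Prop :=
  ∀ z, (∀ p ∈ I.minimalPrimes, ∃ w ∉ p, w * z ∈ Q) → z ∈ Q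

/-- The running hypotheses. -/
structure Ctx (I : Ideal R) (Δ α : R) : Prop where
  cm : IsCMLocalRing R
  le_m : I ≤ maximalIdeal R
  ht2 : ∀ P : Ideal R, P.IsPrime → I ≤ P → 2 ≤ P.height
  hΔ : Δ ∈ I
  hα : α ∈ I
  hΔ2 : ∀ p ∈ I.minimalPrimes, ∃ w ∉ p, w * Δ ∈ I ^ 2
  link : ∀ z, z ∈ I ↔ ∀ a ∈ I, z * a ∈ Ideal.span {Δ, α}
  gci : ∀ p : Ideal R, ∀ hp : p ∈ I.minimalPrimes,
      letI : p.IsPrime := hp.1.1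
      ∃ rs : List (Localization.AtPrime p),
        RingTheory.Sequence.IsRegular (Localization.AtPrime p) rs ∧
        Ideal.ofList rs = Ideal.map (algebraMap R (Localization.AtPrime p)) I

variable {I : Ideal R} {Δ α : R}

theorem Ctx.sat_pair (c : Ctx I Δ α) {f g : R} (hf : f ∈ I) (hg : g ∈ I)
    (hP : ∀ P : Ideal R, P.IsPrime → f ∈ P → g ∈ P → I ≤ P) :
    RP f g ∧ Sat I (Ideal.span {f, g}) := by
  obtain ⟨h1, h2⟩ := cm_pair c.cm (c.le_m hf) (c.le_m hg)
    (fun P hPp hfP hgP => c.ht2 P hPp (hP P hPp hfP hgP))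
  refine ⟨h1, fun z hz => ?_⟩
  by_contra hcon
  obtain ⟨P, hPa, hPz⟩ := assP_exists hcon
  have hPp := hPa.1
  have hle := hPa.le
  have hIP := hP P hPp (hle (x_mem _ _)) (hle (y_mem _ _))
  have hmin : P ∈ I.minimalPrimes := by
    refine ⟨⟨hPp, hIP⟩, fun q hq hqP => ?_⟩
    by_contra hn
    have hqp := hq.1
    have hlt : q < P := lt_of_le_of_ne hqP (fun h => hn h.ge)
    have h3 := Ideal.height_add_one_le_of_lt_of_isPrime hlt
    have h4 := c.ht2 q hqp hq.2
    have h5 : (2 : ℕ∞) + 1 ≤ 2 := (add_le_add_left h4 1).trans (h3.trans (h2 P hPa))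
    exact absurd h5 (by norm_num)
  obtain ⟨w, hw, hwz⟩ := hz P hmin
  exact hw (hPz w hwz)

theorem Ctx.prime_le (c : Ctx I Δ α) {P : Ideal R} (hP : P.IsPrime) (h1 : Δ ∈ P) (h2 : α ∈ P) :
    I ≤ P := by
  intro z hz
  have h3 : z * z ∈ Ideal.span {Δ, α} := (c.link z).1 hz z hz
  have h4 : Ideal.span {Δ, α} ≤ P := Ideal.span_le.2 (by rintro w (rfl | rfl); exacts [h1, h2])
  exact (hP.mem_or_mem (h4 h3)).elim id id

theorem Ctx.rp (c : Ctx I Δ α) : RP α Δ :=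
  (c.sat_pair c.hα c.hΔ fun _ hP h1 h2 => c.prime_le hP h2 h1).1

theorem Ctx.sat_pow (c : Ctx I Δ α) (b : ℕ) : Sat I (Ideal.span {α, Δ ^ b}) := by
  rcases Nat.eq_zero_or_pos b with rfl | hb
  · intro z _
    rw [pow_zero]
    exact mem_pair.2 ⟨0, z, by ring⟩
  · exact (c.sat_pair c.hα (Ideal.pow_mem_of_mem _ c.hΔ _ hb) fun P hP h1 h2 =>
      c.prime_le hP (hP.mem_of_pow_mem _ h2) h1).2

theorem Ctx.satI (c : Ctx I Δ α) : Sat I I := by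
  intro z hz
  rw [c.link]
  intro a ha
  rw [Set.pair_comm]
  have := c.sat_pow 1
  rw [pow_one] at this
  apply this
  intro p hp
  obtain ⟨w, hw, hwz⟩ := hz p hp
  refine ⟨w, hw, ?_⟩
  rw [← mul_assoc, Set.pair_comm]
  exact (c.link _).1 hwz a ha

theorem mem_symb (H : Ideal R) (m : ℕ) (z : R) :
    z ∈ symbolicPower H m ↔ ∃ w ∈ assComplement H, w * z ∈ H ^ m := by
  rw [symbolicPower, Ideal.mem_comap]
  exact IsLocalization.algebraMap_mem_map_algebraMap_iff (assComplement H) _ _ z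

theorem min_ass {p : Ideal R} (hp : p ∈ I.minimalPrimes) : p ∈ associatedPrimes R (R ⧸ I) := by
  apply Module.associatedPrimes.minimalPrimes_annihilator_subset_associatedPrimes
  rwa [Ideal.annihilator_quotient]

theorem avoid (s : Finset (Ideal R)) (hs : ∀ p ∈ s, p.IsPrime) (A : Ideal R)
    (h : ∀ p ∈ s, ∃ w ∉ p, w ∈ A) : ∃ w ∈ A, ∀ p ∈ s, w ∉ p := by
  by_contra hcon
  push Not at hcon
  have hsub : (A : Set R) ⊆ ⋃ P ∈ (s : Set (Ideal R)), (id P : Ideal R) := by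
    intro z hz
    obtain ⟨p, hp, hzp⟩ := hcon z hz
    simp only [Set.mem_iUnion]
    exact ⟨p, hp, hzp⟩
  obtain ⟨P, hP, hle⟩ := (Ideal.subset_union_prime (f := id) ⊤ ⊤ (fun P hP _ _ => hs P hP)).1 hsub
  obtain ⟨w, hw, hwA⟩ := h P hP
  exact hw (hle hwA)

theorem Ctx.ass_min (c : Ctx I Δ α) {P : Ideal R} (hP : P ∈ associatedPrimes R (R ⧸ I)) :
    P ∈ I.minimalPrimes := by
  obtain ⟨hPp, w, hw⟩ := (assP_iff I P).1 hP
  have hle := ((assP_iff I P).1 hP).le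
  by_contra hcon
  have hwI : w ∉ I := fun h => hPp.ne_top ((Ideal.eq_top_iff_one _).2 ((hw 1).2 (by simpa using h)))
  apply hwI
  apply c.satI
  intro p hp
  by_contra hn
  push Not at hn
  have hPp' : P ≤ p := by
    intro r hr
    by_contra hrp
    exact hn r hrp ((hw r).1 hr)
  exact hcon (le_antisymm (hp.2 ⟨hPp, hle⟩ hPp') hPp' ▸ hp)

theorem Ctx.symb_iff (c : Ctx I Δ α) (m : ℕ) (z : R) :
    z ∈ symbolicPower I m ↔ ∀ p ∈ I.minimalPrimes, ∃ w ∉ p, w * z ∈ I ^ m := by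
  rw [mem_symb]
  constructor
  · rintro ⟨w, hw, hwz⟩ p hp
    exact ⟨w, hw p (min_ass hp), hwz⟩
  · intro h
    have hfin := Ideal.finite_minimalPrimes_of_isNoetherianRing R I
    obtain ⟨w, hw, hw2⟩ := avoid hfin.toFinset
      (fun p hp => ((Set.Finite.mem_toFinset _).1 hp).1.1)
      (Submodule.colon (I ^ m) {z}) (fun p hp => by
        obtain ⟨w, hw, hwz⟩ := h p ((Set.Finite.mem_toFinset _).1 hp)
        exact ⟨w, hw, Submodule.mem_colon_singleton.2 hwz⟩)
    exact ⟨w, fun p hp => hw2 p ((Set.Finite.mem_toFinset _).2 (c.ass_min hp)),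
      Submodule.mem_colon_singleton.1 hw⟩

theorem Ctx.symb_sat (c : Ctx I Δ α) (m : ℕ) : Sat I (symbolicPower I m) := by
  intro z hz
  rw [c.symb_iff]
  intro p hp
  obtain ⟨w, hw, hwz⟩ := hz p hp
  obtain ⟨w', hw', h⟩ := (c.symb_iff _ _).1 hwz p hp
  exact ⟨w' * w, fun h => (hp.1.1.mem_or_mem h).elim hw' hw, by rwa [mul_assoc]⟩

/-- local link property, in a localization at a minimal prime -/
theorem Ctx.loc_link (c : Ctx I Δ α) (p : Ideal R) [p.IsPrime] :
    ∀ z ∈ I.map (algebraMap R (Localization.AtPrime p)),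
    ∀ z' ∈ I.map (algebraMap R (Localization.AtPrime p)),
      z * z' ∈ Ideal.span {algebraMap R (Localization.AtPrime p) Δ, algebraMap R _ α} := by
  have h1 : I * I ≤ Ideal.span {Δ, α} := Ideal.mul_le.2 fun a ha b hb => (c.link a).1 ha b hb
  have h2 := Ideal.map_mono (f := algebraMap R (Localization.AtPrime p)) h1
  rw [Ideal.map_mul, Ideal.map_span, Set.image_pair] at h2
  intro z hz z' hz'
  exact h2 (Ideal.mul_mem_mul hz hz')

theorem Ctx.loc_Δ (c : Ctx I Δ α) {p : Ideal R} [p.IsPrime] (hp : p ∈ I.minimalPrimes) :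
    algebraMap R (Localization.AtPrime p) Δ ∈ I.map (algebraMap R (Localization.AtPrime p)) ^ 2 := by
  rw [← Ideal.map_pow, mem_loc]
  exact c.hΔ2 p hp

theorem loc_le_m {p : Ideal R} [p.IsPrime] (hp : I ≤ p) :
    I.map (algebraMap R (Localization.AtPrime p)) ≤ maximalIdeal (Localization.AtPrime p) := by
  rw [Ideal.map_le_iff_le_comap]
  intro z hz
  exact (IsLocalization.AtPrime.to_map_mem_maximal_iff _ p z).2 (hp hz)

theorem Ctx.loc_exists_y (c : Ctx I Δ α) {p : Ideal R} [p.IsPrime] (hp : p ∈ I.minimalPrimes) :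
    ∃ t, I.map (algebraMap R (Localization.AtPrime p)) =
      Ideal.span {algebraMap R (Localization.AtPrime p) α, t} := by
  have hle := loc_le_m hp.1.2
  have hRP := c.rp.loc p
  have hαI := Ideal.mem_map_of_mem (algebraMap R (Localization.AtPrime p)) c.hα
  have hΔ2 := c.loc_Δ hp
  have hlink := c.loc_link p
  obtain ⟨rs, hreg, e⟩ := c.gci p hp
  have hlen : rs.length ≤ 2 := by
    classical
    have h1 := ringKrullDim_add_length_eq_ringKrullDim_of_isRegular rs hreg
    rw [IsLocalization.AtPrime.ringKrullDim_eq_height p (Localization.AtPrime p)] at h1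
    have h2 : p.height ≤ 2 := by
      have hm : p ∈ (Ideal.span (({Δ, α} : Finset R) : Set R)).minimalPrimes := by
        rw [Finset.coe_pair]
        refine ⟨⟨inferInstance, Ideal.span_le.2 (by
          rintro w (rfl | rfl); exacts [hp.1.2 c.hΔ, hp.1.2 c.hα])⟩, fun q hq hqp => ?_⟩
        exact hp.2 ⟨hq.1, c.prime_le hq.1 (hq.2 (x_mem _ _)) (hq.2 (y_mem _ _))⟩ hqp
      have := Ideal.height_le_card_of_mem_minimalPrimes_span_finset hm
      refine this.trans ?_
      exact_mod_cast Finset.card_le_two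
    have hnt : Nontrivial (Localization.AtPrime p ⧸ Ideal.ofList rs) :=
      Ideal.Quotient.nontrivial_iff.2 (fun h => by
        rw [e] at h
        rw [h] at hle
        exact Ideal.IsPrime.ne_top' (top_le_iff.1 hle))
    have h3 : (0 : WithBot ℕ∞) ≤ ringKrullDim (Localization.AtPrime p ⧸ Ideal.ofList rs) :=
      ringKrullDim_nonneg_of_nontrivial
    have h4 : (rs.length : WithBot ℕ∞) ≤ p.height := by
      rw [← h1]
      calc (rs.length : WithBot ℕ∞) = 0 + rs.length := (zero_add _).symm
        _ ≤ _ := by gcongr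
    have h5 : (rs.length : ℕ∞) ≤ p.height := WithBot.coe_le_coe.1 h4
    exact_mod_cast h5.trans h2
  rw [← e] at hle hαI hΔ2 hlink ⊢
  match rs, hlen, hreg with
  | [], _, _ =>
    exfalso
    rw [Ideal.ofList_nil] at hαI
    have h0 : algebraMap R (Localization.AtPrime p) α = 0 := by simpa using hαI
    exact one_ne_zero (hRP.hx 1 (by rw [h0, zero_mul]))
  | [x], _, _ =>
    exfalso
    rw [Ideal.ofList_singleton] at hαI hΔ2 hle
    rw [Ideal.span_singleton_pow] at hΔ2
    obtain ⟨a, ha⟩ := Ideal.mem_span_singleton'.1 hαI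
    obtain ⟨d, hd⟩ := Ideal.mem_span_singleton'.1 hΔ2
    obtain ⟨t, ht⟩ := hRP.hy a (d * x) (by rw [← hd, ← ha]; ring)
    have hx : x ∈ maximalIdeal _ := hle (Ideal.mem_span_singleton_self x)
    have hu : IsUnit (1 - x * t) := by
      by_contra hn
      apply Ideal.IsPrime.ne_top' (I := maximalIdeal (Localization.AtPrime p))
      rw [Ideal.eq_top_iff_one]
      have := add_mem (show (1 - x * t) ∈ maximalIdeal _ from hn) (Ideal.mul_mem_right t _ hx)
      simp at this
    have h0 : a = 0 := hu.mul_left_eq_zero.1 (by rw [← ha] at ht; linear_combination ht)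
    exact one_ne_zero (hRP.hx 1 (by rw [← ha, h0]; ring))
  | [x, y], _, hreg =>
    have e2 : Ideal.ofList [x, y] = Ideal.span {x, y} := by
      simp [Ideal.ofList_cons, Ideal.span_insert]
    rw [e2] at hle hαI hΔ2 hlink ⊢
    exact exists_y (RP.of_regular hreg) (hle (x_mem _ _)) (hle (y_mem _ _)) hRP hΔ2 hαI hlink
  | _ :: _ :: _ :: _, h, _ => simp at h

theorem Ctx.loc_exists_y' (c : Ctx I Δ α) (p : Ideal R) (hp : p ∈ I.minimalPrimes) :
    ∃ y ∈ I, ∀ z ∈ I, ∃ w ∉ p, w * z ∈ Ideal.span {α, y} := by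
  have hpp := hp.1.1
  obtain ⟨t, ht⟩ := c.loc_exists_y hp
  have htI : t ∈ I.map (algebraMap R (Localization.AtPrime p)) := by rw [ht]; exact y_mem _ _
  obtain ⟨⟨y, s⟩, hy⟩ := (IsLocalization.mem_map_algebraMap_iff p.primeCompl _).1 htI
  refine ⟨y, y.2, fun z hz => (mem_loc p _ z).1 ?_⟩
  have hz' := Ideal.mem_map_of_mem (algebraMap R (Localization.AtPrime p)) hz
  rw [ht] at hz'
  rw [Ideal.map_span, Set.image_pair]
  refine (Ideal.span_le.2 ?_) hz'
  rintro w (rfl | rfl)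
  · exact x_mem _ _
  · have hs := IsLocalization.map_units (Localization.AtPrime p) s
    refine (Ideal.unit_mul_mem_iff_mem _ hs).1 ?_
    rw [mul_comm, hy]
    exact y_mem _ _

theorem Ctx.exists_global_y (c : Ctx I Δ α) :
    ∃ y ∈ I, ∀ p ∈ I.minimalPrimes, ∀ z ∈ I, ∃ w ∉ p, w * z ∈ Ideal.span {α, y} := by
  classical
  have hfin := Ideal.finite_minimalPrimes_of_isNoetherianRing R I
  have hmem : ∀ {p}, p ∈ hfin.toFinset ↔ p ∈ I.minimalPrimes := Set.Finite.mem_toFinset _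
  choose! Y hYI hY using c.loc_exists_y'
  have hE : ∀ p ∈ I.minimalPrimes, ∃ e ∉ p, ∀ q ∈ I.minimalPrimes, q ≠ p → e ∈ q := by
    intro p hp
    have : ¬ (hfin.toFinset.erase p).inf id ≤ p := by
      rw [hp.1.1.inf_le']
      rintro ⟨q, hq, hqp⟩
      rw [Finset.mem_erase, hmem] at hq
      exact hq.1 (le_antisymm hqp (hp.2 hq.2.1 hqp))
    obtain ⟨e, he, hep⟩ := SetLike.not_le_iff_exists.1 this
    refine ⟨e, hep, fun q hq hqp => ?_⟩
    exact (Finset.inf_le (f := id) (Finset.mem_erase.2 ⟨hqp, hmem.2 hq⟩)) he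
  choose! E hEp hEq using hE
  refine ⟨∑ p ∈ hfin.toFinset, E p * Y p, sum_mem fun p hp =>
    Ideal.mul_mem_left _ _ (hYI p (hmem.1 hp)), fun p hp => ?_⟩
  have hpp := hp.1.1
  set y := ∑ p ∈ hfin.toFinset, E p * Y p with hy
  let φ := algebraMap R (Localization.AtPrime p)
  have key : I.map φ ≤ (Ideal.span {α, y}).map φ := by
    apply nak
    rw [Ideal.map_le_iff_le_comap]
    intro z hz
    rw [Ideal.mem_comap]
    have h1 := (mem_loc p _ z).2 (hY p hp z hz)
    rw [Ideal.map_span, Set.image_pair] at h1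
    refine (Ideal.span_le.2 ?_) h1
    rintro w (rfl | rfl)
    · exact Ideal.mem_sup_left (Ideal.mem_map_of_mem _ (x_mem _ _))
    · have hs := IsLocalization.map_units (Localization.AtPrime p) (⟨E p, hEp p hp⟩ : p.primeCompl)
      refine (Ideal.unit_mul_mem_iff_mem _ hs).1 ?_
      have e : E p * Y p = y - ∑ q ∈ hfin.toFinset.erase p, E q * Y q := by
        rw [hy, ← Finset.add_sum_erase _ _ (hmem.2 hp)]; ring
      rw [← map_mul, e, map_sub]
      refine sub_mem (Ideal.mem_sup_left (Ideal.mem_map_of_mem _ (y_mem _ _)))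
        (Ideal.mem_sup_right ?_)
      rw [map_sum]
      refine sum_mem fun q hq => ?_
      rw [Finset.mem_erase, hmem] at hq
      rw [map_mul]
      exact Ideal.mul_mem_mul ((IsLocalization.AtPrime.to_map_mem_maximal_iff _ p _).2
        (hEq q hq.2 p hp hq.1.symm)) (Ideal.mem_map_of_mem _ (hYI q hq.2))
  exact fun z hz => (mem_loc p _ z).1 (key (Ideal.mem_map_of_mem _ hz))

theorem Ctx.loc_struct (c : Ctx I Δ α) {y : R} (hy : y ∈ I) {p : Ideal R} [p.IsPrime]
    (hp : p ∈ I.minimalPrimes) (hyp : ∀ z ∈ I, ∃ w ∉ p, w * z ∈ Ideal.span {α, y}) :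
    I.map (algebraMap R (Localization.AtPrime p)) =
      Ideal.span {algebraMap R (Localization.AtPrime p) α, algebraMap R _ y} ∧
    RP (algebraMap R (Localization.AtPrime p) α) (algebraMap R _ y) ∧
    ∃ w, IsUnit w ∧ ∃ i ∈ I.map (algebraMap R (Localization.AtPrime p)),
      algebraMap R (Localization.AtPrime p) Δ = w * algebraMap R _ y ^ 2 + algebraMap R _ α * i := by
  have e : I.map (algebraMap R (Localization.AtPrime p)) =
      Ideal.span {algebraMap R (Localization.AtPrime p) α, algebraMap R _ y} := by
    apply le_antisymm
    · rw [Ideal.map_le_iff_le_comap]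
      intro z hz
      have := (mem_loc p _ z).2 (hyp z hz)
      rwa [Ideal.map_span, Set.image_pair] at this
    · refine Ideal.span_le.2 ?_
      rintro w (rfl | rfl)
      exacts [Ideal.mem_map_of_mem _ c.hα, Ideal.mem_map_of_mem _ hy]
  refine ⟨e, ?_⟩
  have h1 := c.loc_Δ hp
  have h2 := c.loc_link p
  have h3 := loc_le_m hp.1.2
  rw [e] at h1 h2 h3 ⊢
  exact struct_of_y (h3 (x_mem _ _)) (c.rp.loc p) h1 h2

end CtxPart


section KPart
variable {R : Type u} [CommRing R] [IsNoetherianRing R] [IsLocalRing R]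

/-- The ideal `K = α I + (Δ)`. -/
def Kid (I : Ideal R) (Δ α : R) : Ideal R := Ideal.span {α} * I ⊔ Ideal.span {Δ}

variable {I : Ideal R} {Δ α : R}

theorem mem_K {z : R} : z ∈ Kid I Δ α ↔ ∃ i ∈ I, ∃ d, z = α * i + d * Δ := by
  rw [Kid, mem_sup_sing]
  constructor
  · rintro ⟨k, hk, t, rfl⟩
    obtain ⟨i, hi, rfl⟩ := Ideal.mem_span_singleton_mul.1 hk
    exact ⟨i, hi, t, by ring⟩
  · rintro ⟨i, hi, d, rfl⟩
    exact ⟨α * i, Ideal.mem_span_singleton_mul.2 ⟨i, hi, rfl⟩, d, by ring⟩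

theorem Δ_mem_K : Δ ∈ Kid I Δ α := mem_K.2 ⟨0, zero_mem _, 1, by ring⟩

theorem α_mem_K {i : R} (hi : i ∈ I) : α * i ∈ Kid I Δ α := mem_K.2 ⟨i, hi, 0, by ring⟩

theorem Ctx.K_le_I (c : Ctx I Δ α) : Kid I Δ α ≤ I :=
  sup_le Ideal.mul_le_right ((Ideal.span_singleton_le_iff_mem _).2 c.hΔ)

theorem Ctx.K_loc (c : Ctx I Δ α) {p : Ideal R} [p.IsPrime] (hp : p ∈ I.minimalPrimes) :
    (Kid I Δ α).map (algebraMap R (Localization.AtPrime p)) =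
      I.map (algebraMap R (Localization.AtPrime p)) ^ 2 := by
  obtain ⟨y, hy, hyp⟩ := c.exists_global_y
  obtain ⟨e, h1, w, hw, i, hi, hΔ⟩ := c.loc_struct hy hp (hyp p hp)
  have hαI := Ideal.mem_map_of_mem (algebraMap R (Localization.AtPrime p)) c.hα
  rw [Kid, Ideal.map_sup, Ideal.map_mul, Ideal.map_span, Ideal.map_span, Set.image_singleton,
    Set.image_singleton]
  apply le_antisymm
  · refine sup_le ?_ ((Ideal.span_singleton_le_iff_mem _).2 (c.loc_Δ hp))
    rw [pow_two]
    exact Ideal.mul_mono_left ((Ideal.span_singleton_le_iff_mem _).2 hαI)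
  · intro z hz
    rw [e] at hz
    obtain ⟨a, ha, d, rfl⟩ := pow_split _ _ _ hz
    rw [Nat.add_one_sub_one, pow_one, ← e] at ha
    have hA : ∀ b ∈ I.map (algebraMap R (Localization.AtPrime p)),
        algebraMap R (Localization.AtPrime p) α * b ∈
        Ideal.span {algebraMap R (Localization.AtPrime p) α} * I.map (algebraMap R _) ⊔
        Ideal.span {algebraMap R (Localization.AtPrime p) Δ} := fun b hb =>
      Ideal.mem_sup_left (Ideal.mul_mem_mul (Ideal.mem_span_singleton_self _) hb)
    refine add_mem (hA a ha) (Ideal.mul_mem_left _ _ ?_)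
    refine (Ideal.unit_mul_mem_iff_mem _ hw).1 ?_
    have : w * algebraMap R (Localization.AtPrime p) y ^ 2 = algebraMap R _ Δ
      - algebraMap R (Localization.AtPrime p) α * i := by rw [hΔ]; ring
    rw [this]
    exact sub_mem (Ideal.mem_sup_right (Ideal.mem_span_singleton_self _)) (hA i hi)

theorem Ctx.satK (c : Ctx I Δ α) : Sat I (Kid I Δ α) := by
  intro z hz
  have h1 : z ∈ Ideal.span {α, Δ ^ 1} := by
    apply c.sat_pow 1
    intro p hp
    obtain ⟨w, hw, hwz⟩ := hz p hp
    obtain ⟨i, hi, d, e⟩ := mem_K.1 hwz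
    exact ⟨w, hw, mem_pair.2 ⟨i, d, by rw [e]; ring⟩⟩
  obtain ⟨z', d, rfl⟩ := mem_pair.1 h1
  refine mem_K.2 ⟨z', c.satI z' fun p hp => ?_, d, by ring⟩
  obtain ⟨w, hw, hwz⟩ := hz p hp
  obtain ⟨i, hi, d', e⟩ := mem_K.1 hwz
  refine ⟨w, hw, ?_⟩
  obtain ⟨t, ht⟩ := c.rp.hy (d' - w * d) (w * z' - i) (by linear_combination -e)
  have := c.rp.xcancel (c := w * z' - i) (d := Δ * t) (by linear_combination e + Δ * ht)
  have e2 : w * z' = i + Δ * t := by linear_combination this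
  rw [e2]
  exact add_mem hi (Ideal.mul_mem_right _ _ c.hΔ)

theorem Ctx.sq_le_K (c : Ctx I Δ α) : I ^ 2 ≤ Kid I Δ α := by
  intro z hz
  apply c.satK
  intro p hp
  have := hp.1.1
  rw [← mem_loc, c.K_loc hp, ← Ideal.map_pow]
  exact Ideal.mem_map_of_mem _ hz

theorem Ctx.mul_mem_K (c : Ctx I Δ α) {a b : R} (ha : a ∈ I) (hb : b ∈ I) : a * b ∈ Kid I Δ α :=
  c.sq_le_K (by rw [pow_two]; exact Ideal.mul_mem_mul ha hb)

theorem Ctx.T_mem (c : Ctx I Δ α) : α ^ 2 ∈ Kid I Δ α := by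
  rw [pow_two]; exact c.mul_mem_K c.hα c.hα

theorem Ctx.TU_le (c : Ctx I Δ α) : Ideal.span {α ^ 2, Δ} ≤ Kid I Δ α :=
  Ideal.span_le.2 (by rintro w (rfl | rfl); exacts [c.T_mem, Δ_mem_K])

theorem Ctx.K_sq (c : Ctx I Δ α) : Kid I Δ α * Kid I Δ α = Ideal.span {α ^ 2, Δ} * Kid I Δ α := by
  refine le_antisymm (Ideal.mul_le.2 fun a ha b hb => ?_) (Ideal.mul_mono_left c.TU_le)
  obtain ⟨i, hi, d, rfl⟩ := mem_K.1 ha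
  obtain ⟨i', hi', d', rfl⟩ := mem_K.1 hb
  refine mem_pair_mul.2 ⟨i * i', c.mul_mem_K hi hi', α * (d * i' + d' * i) + d * d' * Δ,
    mem_K.2 ⟨_, add_mem (Ideal.mul_mem_left _ _ hi') (Ideal.mul_mem_left _ _ hi), _, rfl⟩, by ring⟩

theorem Ctx.K_pow (c : Ctx I Δ α) (j : ℕ) :
    Kid I Δ α ^ (j + 1) = Ideal.span {α ^ 2, Δ} ^ j * Kid I Δ α := by
  induction j with
  | zero => simp
  | succ j ih => rw [pow_succ, ih, mul_assoc, c.K_sq, ← mul_assoc, ← pow_succ]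

theorem Ctx.mem_K_pow (c : Ctx I Δ α) (j : ℕ) {z : R} : z ∈ Kid I Δ α ^ (j + 1) ↔
    ∃ k ∈ Kid I Δ α ^ j, ∃ k' ∈ Kid I Δ α, z = α ^ 2 * k + Δ ^ j * k' := by
  constructor
  · intro hz
    rcases j with _ | j
    · exact ⟨0, zero_mem _, z, by simpa using hz, by ring⟩
    · rw [c.K_pow (j + 1), pair_pow_succ, Ideal.sup_mul, mul_assoc, ← c.K_pow j] at hz
      obtain ⟨a, ha, b, hb, rfl⟩ := Submodule.mem_sup.1 hz
      obtain ⟨k, hk, rfl⟩ := Ideal.mem_span_singleton_mul.1 ha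
      obtain ⟨k', hk', rfl⟩ := Ideal.mem_span_singleton_mul.1 hb
      exact ⟨k, hk, k', hk', rfl⟩
  · rintro ⟨k, hk, k', hk', rfl⟩
    refine add_mem ?_ ?_
    · rw [pow_succ']; exact Ideal.mul_mem_mul c.T_mem hk
    · rw [pow_succ]; exact Ideal.mul_mem_mul (Ideal.pow_mem_pow Δ_mem_K _) hk'

theorem Ctx.satKpow (c : Ctx I Δ α) (j : ℕ) : Sat I (Kid I Δ α ^ j) := by
  induction j with
  | zero => intro z _; simp
  | succ j ih =>
    intro z hz
    have hz2 : ∀ p ∈ I.minimalPrimes, ∃ w ∉ p, ∃ k ∈ Kid I Δ α ^ j, ∃ i ∈ I, ∃ d,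
        w * z = α ^ 2 * k + Δ ^ j * (α * i + d * Δ) := by
      intro p hp
      obtain ⟨w, hw, hwz⟩ := hz p hp
      obtain ⟨k, hk, k', hk', e⟩ := (c.mem_K_pow j).1 hwz
      obtain ⟨i, hi, d, rfl⟩ := mem_K.1 hk'
      exact ⟨w, hw, k, hk, i, hi, d, e⟩
    have h1 : z ∈ Ideal.span {α, Δ ^ (j + 1)} := by
      apply c.sat_pow (j + 1)
      intro p hp
      obtain ⟨w, hw, k, hk, i, hi, d, e⟩ := hz2 p hp
      exact ⟨w, hw, mem_pair.2 ⟨α * k + Δ ^ j * i, d, by rw [e]; ring⟩⟩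
    obtain ⟨z', d, rfl⟩ := mem_pair.1 h1
    have hz3 : ∀ p ∈ I.minimalPrimes, ∃ w ∉ p, ∃ k ∈ Kid I Δ α ^ j, ∃ i ∈ I,
        w * z' = α * k + Δ ^ j * i := by
      intro p hp
      obtain ⟨w, hw, k, hk, i, hi, d', e⟩ := hz2 p hp
      obtain ⟨t, ht⟩ := (c.rp.pow (j + 1)).hy (d' - w * d) (w * z' - α * k - Δ ^ j * i)
        (by linear_combination -e)
      refine ⟨w, hw, k, hk, i + Δ * t, add_mem hi (Ideal.mul_mem_right _ _ c.hΔ), ?_⟩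
      apply c.rp.xcancel
      linear_combination e + Δ ^ (j + 1) * ht
    have h2 : z' ∈ Ideal.span {α, Δ ^ j} := by
      apply c.sat_pow j
      intro p hp
      obtain ⟨w, hw, k, hk, i, hi, e⟩ := hz3 p hp
      exact ⟨w, hw, mem_pair.2 ⟨k, i, by rw [e]; ring⟩⟩
    obtain ⟨a, b, rfl⟩ := mem_pair.1 h2
    have h4 : ∀ p ∈ I.minimalPrimes, ∃ w ∉ p, w * a ∈ Kid I Δ α ^ j ∧ w * b ∈ I := by
      intro p hp
      obtain ⟨w, hw, k, hk, i, hi, e⟩ := hz3 p hp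
      obtain ⟨t, ht⟩ := (c.rp.pow j).hy (w * b - i) (k - w * a) (by linear_combination e)
      have h5 := c.rp.xcancel (c := k - w * a) (d := Δ ^ j * t) (by
        linear_combination -e + Δ ^ j * ht)
      refine ⟨w, hw, ?_, ?_⟩
      · have : w * a = k - Δ ^ j * t := by linear_combination -h5
        rw [this]
        exact sub_mem hk (Ideal.mul_mem_right _ _ (Ideal.pow_mem_pow Δ_mem_K _))
      · have : w * b = i + α * t := by linear_combination ht
        rw [this]
        exact add_mem hi (Ideal.mul_mem_right _ _ c.hα)
    have ha : a ∈ Kid I Δ α ^ j := ih a fun p hp => by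
      obtain ⟨w, hw, h, _⟩ := h4 p hp; exact ⟨w, hw, h⟩
    have hb : b ∈ I := c.satI b fun p hp => by
      obtain ⟨w, hw, _, h⟩ := h4 p hp; exact ⟨w, hw, h⟩
    refine (c.mem_K_pow j).2 ⟨a, ha, α * b + d * Δ, mem_K.2 ⟨b, hb, d, rfl⟩, by ring⟩

theorem Ctx.symb_even (c : Ctx I Δ α) (j : ℕ) : symbolicPower I (2 * j) = Kid I Δ α ^ j := by
  have key : ∀ p ∈ I.minimalPrimes, ∀ z, (∃ w ∉ p, w * z ∈ I ^ (2 * j)) ↔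
      ∃ w ∉ p, w * z ∈ Kid I Δ α ^ j := by
    intro p hp z
    have := hp.1.1
    rw [← mem_loc, ← mem_loc, Ideal.map_pow, Ideal.map_pow, c.K_loc hp, pow_mul]
  ext z
  rw [c.symb_iff]
  constructor
  · intro h
    exact c.satKpow j z fun p hp => (key p hp z).1 (h p hp)
  · intro h p hp
    exact (key p hp z).2 ⟨1, (Ideal.ne_top_iff_one _).1 hp.1.1.ne_top, by rwa [one_mul]⟩

end KPart


section Red9
variable {R : Type u} [CommRing R]

theorem pair_pow_add (p q : R) (a b : ℕ) : Ideal.span {p, q} ^ (b + a) ≤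
    Ideal.span {p ^ a} * Ideal.span {p, q} ^ b ⊔ Ideal.span {q ^ b} * Ideal.span {p, q} ^ a := by
  induction a with
  | zero => refine le_sup_of_le_left ?_; simp
  | succ a ih =>
    rw [← add_assoc, pair_pow_succ]
    refine sup_le ?_ ?_
    · refine (Ideal.mul_mono_right ih).trans ?_
      rw [Ideal.mul_sup, ← mul_assoc, Ideal.span_singleton_mul_span_singleton, ← pow_succ']
      refine sup_le_sup le_rfl ?_
      rw [← mul_assoc, mul_comm (Ideal.span {p}), mul_assoc, pow_succ' _ a]
      exact Ideal.mul_mono_right (Ideal.mul_mono_left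
        ((Ideal.span_singleton_le_iff_mem _).2 (x_mem _ _)))
    · refine le_sup_of_le_right ((Ideal.span_singleton_le_iff_mem _).2 ?_)
      rw [add_assoc, pow_add q]
      exact Ideal.mul_mem_mul (Ideal.mem_span_singleton_self _) (Ideal.pow_mem_pow (y_mem _ _) _)

theorem red_crit {K J : Ideal R} {T U : R} (hT : T ∈ K) (hU : U ∈ K)
    (hK : ∀ m, K ^ (m + 1) = Ideal.span {T, U} ^ m * K)
    {j a b : ℕ} (hj : 1 ≤ j) (hJ : J ≤ K ^ j) (ha : j ≤ a) (hb : j ≤ b)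
    (hTa : T ^ a ∈ J * K ^ (a - j)) (hUb : U ^ b ∈ J * K ^ (b - j)) : IsReduction J (K ^ j) := by
  have hle : Ideal.span {T, U} ≤ K := Ideal.span_le.2 (by rintro w (rfl | rfl); exacts [hT, hU])
  have h1 : K ^ (b + a + 1) ≤ J * K ^ (b + a + 1 - j) := by
    rw [hK]
    refine (Ideal.mul_mono_left (pair_pow_add T U a b)).trans ?_
    rw [Ideal.sup_mul]
    refine sup_le ?_ ?_
    · rw [mul_assoc]
      have : K ^ (b + a + 1 - j) = K ^ (a - j) * (K ^ b * K) := by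
        rw [← pow_succ, ← pow_add]; congr 1; omega
      rw [this, ← mul_assoc J]
      exact Ideal.mul_mono ((Ideal.span_singleton_le_iff_mem _).2 hTa)
        (Ideal.mul_mono_left (Ideal.pow_right_mono hle _))
    · rw [mul_assoc]
      have : K ^ (b + a + 1 - j) = K ^ (b - j) * (K ^ a * K) := by
        rw [← pow_succ, ← pow_add]; congr 1; omega
      rw [this, ← mul_assoc J]
      exact Ideal.mul_mono ((Ideal.span_singleton_le_iff_mem _).2 hUb)
        (Ideal.mul_mono_left (Ideal.pow_right_mono hle _))
  apply red_of_le hJ (r := b + a + 1)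
  rw [← pow_mul, ← pow_mul]
  have hx : b + a + 1 ≤ j * (b + a + 1) := Nat.le_mul_of_pos_left _ hj
  have e1 : j * (b + a + 1 + 1) = (b + a + 1) + (j * (b + a + 1 + 1) - (b + a + 1)) := by
    rw [mul_add j]; omega
  have e2 : j * (b + a + 1) = (b + a + 1 - j) + (j * (b + a + 1 + 1) - (b + a + 1)) := by
    rw [mul_add j (b + a + 1)]; omega
  rw [e1, pow_add K]
  rw [e2]
  rw [pow_add K (b + a + 1 - j), ← mul_assoc]
  exact Ideal.mul_mono_left h1

variable [IsNoetherianRing R] [IsLocalRing R]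
variable {I : Ideal R} {Δ α : R}

theorem Ctx.red1 (c : Ctx I Δ α) {y : R} (hy : y ∈ I) (l : R) (j : ℕ) :
    IsReduction (Ideal.span {α ^ (2 * (j + 1)), Δ ^ j * (Δ - l * (α * y))})
      (Kid I Δ α ^ (j + 1)) := by
  have hV : α * y ∈ Kid I Δ α := α_mem_K hy
  have hW : Δ - l * (α * y) ∈ Kid I Δ α := sub_mem Δ_mem_K (Ideal.mul_mem_left _ _ hV)
  refine red_crit (a := j + 1) (b := 3 * j + 2) c.T_mem Δ_mem_K c.K_pow (by omega) ?_ le_rfl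
    (by omega) ?_ ?_
  · refine Ideal.span_le.2 ?_
    rintro w (rfl | rfl)
    · rw [pow_mul]; exact Ideal.pow_mem_pow c.T_mem _
    · rw [pow_succ]; exact Ideal.mul_mem_mul (Ideal.pow_mem_pow Δ_mem_K _) hW
  · rw [Nat.sub_self, pow_zero, Ideal.one_eq_top, Ideal.mul_top, ← pow_mul]; exact x_mem _ _
  · have h1 := elim_pow (J' := Ideal.span {Δ - l * (α * y)}) (H := Kid I Δ α) Δ_mem_K hV
      (Ideal.mem_span_singleton_self _) (2 * (j + 1)) 0 1 (by simp)
    obtain ⟨s, hs, e⟩ := Ideal.mem_span_singleton_mul.1 h1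
    rw [show 2 * (j + 1) + 0 - 1 = 2 * j + 1 by omega] at hs
    rw [show 3 * j + 2 - (j + 1) = 2 * j + 1 by omega]
    refine mem_pair_mul.2 ⟨l ^ (2 * (j + 1)) * (y ^ (2 * (j + 1)) * Δ ^ j), ?_, s, hs, ?_⟩
    · refine Ideal.mul_mem_left _ _ ?_
      rw [show 2 * j + 1 = (j + 1) + j by omega, pow_add _ (j + 1) j, pow_mul]
      exact Ideal.mul_mem_mul (Ideal.pow_mem_pow (by rw [pow_two]; exact c.mul_mem_K hy hy) _)
        (Ideal.pow_mem_pow Δ_mem_K _)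
    · have e3 : Δ ^ (3 * j + 2) = Δ ^ j * Δ ^ (2 * (j + 1)) := by rw [← pow_add]; congr 1; omega
      rw [e3]
      have e4 : (α * y) ^ (2 * (j + 1)) = α ^ (2 * (j + 1)) * y ^ (2 * (j + 1)) := mul_pow _ _ _
      rw [e4] at e
      linear_combination - Δ ^ j * e

theorem Ctx.good (c : Ctx I Δ α) {y : R} (hy : y ∈ I) :
    ∃ M, ∃ d : Fin (M + 1) → R, (∃ i, d i ∉ maximalIdeal R) ∧
      ∀ l, IsUnit (∑ i, d i * l ^ (M - (i : ℕ))) → Kid I Δ α ^ (M + 1) ≤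
        Ideal.span {Δ, α * (α - l * y)} * Kid I Δ α ^ M := by
  classical
  set K := Kid I Δ α with hK
  have hV : α * y ∈ K := α_mem_K hy
  obtain ⟨s, hs⟩ := (IsNoetherian.noetherian K : K.FG)
  set M := s.card + 1 with hM
  have hgen : Gen (Ideal.span {(α ^ 2) ^ (M - 1)} * K) (s.card) := by
    refine ⟨s.image (fun z => (α ^ 2) ^ (M - 1) * z), Finset.card_image_le, ?_⟩
    rw [← hs, Finset.coe_image]
    exact (span_mul_fin _ _).symm
  have hdec : ∀ i : Fin (M + 1), ∃ w ∈ Ideal.span {(α ^ 2) ^ (M - 1)} * K,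
      ∃ v ∈ Ideal.span {Δ} * K ^ (M - 1), (α * y) ^ (i : ℕ) * (α ^ 2) ^ (M - i) = w + v := by
    intro i
    have h1 : (α * y) ^ (i : ℕ) * (α ^ 2) ^ (M - i) ∈ K ^ (s.card + 1) := by
      have := Ideal.mul_mem_mul (Ideal.pow_mem_pow hV i) (Ideal.pow_mem_pow c.T_mem (M - i))
      rw [← pow_add] at this
      convert this using 2
      have := i.2
      omega
    rw [c.K_pow, Set.pair_comm] at h1
    have h2 : Ideal.span {Δ, α ^ 2} ^ s.card * K ≤
        Ideal.span {Δ} * K ^ (M - 1) ⊔ Ideal.span {(α ^ 2) ^ (M - 1)} * K := by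
      rw [hM, Nat.add_sub_cancel]
      rcases s.card with _ | t
      · refine le_sup_of_le_right ?_; simp
      · rw [pair_pow_succ, Ideal.sup_mul, mul_assoc, Set.pair_comm Δ, ← c.K_pow]
    obtain ⟨v, hv, w, hw, e⟩ := Submodule.mem_sup.1 (h2 h1)
    exact ⟨w, hw, v, hv, by rw [← e, add_comm]⟩
  choose w hw v hv hwv using hdec
  obtain ⟨d, hd, hsum⟩ := gen_rel hgen (ι := Fin (M + 1)) (by rw [Fintype.card_fin]; omega) w hw
  refine ⟨M, d, hd, fun l hl => ?_⟩
  set Q := Ideal.span {Δ, α * (α - l * y)} with hQ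
  have hUQ : Ideal.span {Δ} ≤ Q := (Ideal.span_singleton_le_iff_mem _).2 (x_mem _ _)
  have hWQ : Ideal.span {α * (α - l * y)} ≤ Q := (Ideal.span_singleton_le_iff_mem _).2 (y_mem _ _)
  have hKM : K * K ^ (M - 1) = K ^ M := by rw [← pow_succ']; congr 1
  have hTM : (α ^ 2) ^ M ∈ Q * K ^ (M - 1) ⊔ maximalIdeal R * K ^ M := by
    rw [← Ideal.unit_mul_mem_iff_mem _ hl, Finset.sum_mul]
    have hterm : ∀ i : Fin (M + 1), l ^ (M - (i : ℕ)) * (α ^ 2) ^ M -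
        l ^ M * ((α * y) ^ (i : ℕ) * (α ^ 2) ^ (M - i)) ∈ Q * K ^ (M - 1) := by
      intro i
      have h1 := elim_pow (J' := Q) (H := K) c.T_mem hV (l := l)
        (by convert hWQ (Ideal.mem_span_singleton_self _) using 1; ring) i (M - i)
        ((α ^ 2) ^ (M - i)) (Ideal.pow_mem_pow c.T_mem _)
      have hi := i.2
      have e1 : (i : ℕ) + (M - i) = M := by omega
      rw [e1] at h1
      have e2 : (α ^ 2) ^ M = (α ^ 2) ^ (i : ℕ) * (α ^ 2) ^ (M - i) := by rw [← pow_add, e1]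
      have e3 : l ^ M = l ^ (M - i) * l ^ (i : ℕ) := by rw [← pow_add]; congr 1; omega
      rw [e2, e3]
      convert Ideal.mul_mem_left _ (l ^ (M - i)) h1 using 1
      ring
    have h3 : ∑ i, d i * (l ^ (M - (i : ℕ)) * (α ^ 2) ^ M -
        l ^ M * ((α * y) ^ (i : ℕ) * (α ^ 2) ^ (M - i))) ∈ Q * K ^ (M - 1) :=
      sum_mem fun i _ => Ideal.mul_mem_left _ _ (hterm i)
    have h4 : ∑ i, d i * v i ∈ Q * K ^ (M - 1) :=
      sum_mem fun i _ => Ideal.mul_mem_left _ _ (Ideal.mul_mono_left hUQ (hv i))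
    have h5 : ∑ i, d i * w i ∈ maximalIdeal R * K ^ M := by
      refine Ideal.mul_mono_right ?_ hsum
      rw [← hKM, mul_comm K]
      exact Ideal.mul_mono_left ((Ideal.span_singleton_le_iff_mem _).2
        (Ideal.pow_mem_pow c.T_mem _))
    have h6 := add_mem (Ideal.mem_sup_left (T := maximalIdeal R * K ^ M)
      (add_mem h3 (Ideal.mul_mem_left _ (l ^ M) h4)))
      (Ideal.mem_sup_right (Ideal.mul_mem_left _ (l ^ M) h5))
    rw [Finset.mul_sum, Finset.mul_sum, ← Finset.sum_add_distrib, ← Finset.sum_add_distrib] at h6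
    convert h6 using 1
    refine Finset.sum_congr rfl fun i _ => ?_
    rw [hwv]
    ring
  apply nak
  nth_rewrite 1 [c.K_pow M]
  have hMe : M = (M - 1) + 1 := by omega
  have h7 : Ideal.span {α ^ 2, Δ} ^ M ≤ Ideal.span {(α ^ 2) ^ M} ⊔ Ideal.span {Δ} * K ^ (M - 1) := by
    rw [Set.pair_comm, hMe, pair_pow_succ, Nat.add_sub_cancel, sup_comm]
    exact sup_le_sup le_rfl (Ideal.mul_mono_right (Ideal.pow_right_mono
      (by rw [Set.pair_comm]; exact c.TU_le) _))
  refine (Ideal.mul_mono_left (h7.trans (sup_le ((Ideal.span_singleton_le_iff_mem _).2 hTM)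
    (le_sup_of_le_left (Ideal.mul_mono_left hUQ))))).trans ?_
  rw [Ideal.sup_mul, mul_assoc, mul_assoc, mul_comm _ K, hKM, ← pow_succ]

theorem red2_iter {K : Ideal R} {U W : R} (hU : U ∈ K) {M : ℕ} (h : K ^ (M + 1) ≤ Ideal.span {U, W} * K ^ M)
    (s : ℕ) : K ^ (M + s + 1) ≤ Ideal.span {U ^ (s + 1)} * K ^ M ⊔ Ideal.span {W} * K ^ (M + s) := by
  have h' : K ^ (M + 1) ≤ Ideal.span {U} * K ^ M ⊔ Ideal.span {W} * K ^ M := by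
    rwa [Ideal.span_insert, Ideal.sup_mul] at h
  induction s with
  | zero => simpa using h'
  | succ s ih =>
    rw [pow_succ]
    refine (Ideal.mul_mono_left ih).trans ?_
    rw [Ideal.sup_mul, mul_assoc, mul_assoc, ← pow_succ, ← pow_succ]
    refine sup_le ?_ le_sup_right
    refine (Ideal.mul_mono_right h').trans ?_
    rw [Ideal.mul_sup, ← mul_assoc, Ideal.span_singleton_mul_span_singleton, ← pow_succ]
    refine sup_le_sup le_rfl ?_
    rw [← mul_assoc, mul_comm (Ideal.span {U ^ (s + 1)}), mul_assoc, add_comm M, pow_add K]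
    exact Ideal.mul_mono_right (Ideal.mul_mono_left ((Ideal.span_singleton_le_iff_mem _).2
      (Ideal.pow_mem_pow hU _)))

theorem Ctx.red2 (c : Ctx I Δ α) {y : R} (hy : y ∈ I) {l : R} {M : ℕ}
    (hM : Kid I Δ α ^ (M + 1) ≤ Ideal.span {Δ, α * (α - l * y)} * Kid I Δ α ^ M) (j : ℕ) :
    IsReduction (Ideal.span {Δ ^ (j + 1), α ^ (2 * j + 1) * (α - l * y)})
      (Kid I Δ α ^ (j + 1)) := by
  have hW : α * (α - l * y) ∈ Kid I Δ α := α_mem_K (sub_mem c.hα (Ideal.mul_mem_left _ _ hy))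
  have eW : α ^ (2 * j + 1) * (α - l * y) = (α ^ 2) ^ j * (α * (α - l * y)) := by
    rw [← pow_mul]; ring
  refine red_crit (a := M + 2 * j + 1) (b := j + 1) c.T_mem Δ_mem_K c.K_pow (by omega) ?_ (by omega)
    le_rfl ?_ ?_
  · refine Ideal.span_le.2 ?_
    rintro w (rfl | rfl)
    · exact Ideal.pow_mem_pow Δ_mem_K _
    · rw [eW, pow_succ]; exact Ideal.mul_mem_mul (Ideal.pow_mem_pow c.T_mem _) hW
  · have h1 := red2_iter (Δ_mem_K) hM j (Ideal.pow_mem_pow c.T_mem (M + j + 1))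
    obtain ⟨a, ha, b, hb, e⟩ := Submodule.mem_sup.1 h1
    obtain ⟨a, ha', rfl⟩ := Ideal.mem_span_singleton_mul.1 ha
    obtain ⟨b, hb', rfl⟩ := Ideal.mem_span_singleton_mul.1 hb
    rw [show M + 2 * j + 1 - (j + 1) = M + j by omega]
    refine mem_pair_mul.2 ⟨(α ^ 2) ^ j * a, ?_, b, hb', ?_⟩
    · rw [add_comm M, pow_add]
      exact Ideal.mul_mem_mul (Ideal.pow_mem_pow c.T_mem _) ha'
    · rw [eW, show M + 2 * j + 1 = j + (M + j + 1) by omega, pow_add (α ^ 2) j, ← e]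
      ring
  · rw [Nat.sub_self, pow_zero, Ideal.one_eq_top, Ideal.mul_top]; exact x_mem _ _

theorem exists_lams [Infinite (ResidueField R)] {M : ℕ} (d : Fin (M + 1) → R)
    (hd : ∃ i, d i ∉ maximalIdeal R) : ∃ lam : ℕ → R, lam 0 = 0 ∧
      (∀ l l', l ≠ l' → IsUnit (lam l - lam l')) ∧
      ∀ l, 1 ≤ l → IsUnit (∑ i, d i * lam l ^ (M - (i : ℕ))) := by
  classical
  let f : Polynomial (ResidueField R) :=
    ∑ i, Polynomial.C (residue R (d i)) * Polynomial.X ^ (M - (i : ℕ))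
  have hf : f ≠ 0 := by
    obtain ⟨i, hi⟩ := hd
    intro h
    apply hi
    rw [← residue_eq_zero_iff]
    have := congrArg (fun p => Polynomial.coeff p (M - (i : ℕ))) h
    simp only [f, Polynomial.finsetSum_coeff, Polynomial.coeff_C_mul, Polynomial.coeff_X_pow,
      Polynomial.coeff_zero] at this
    rw [Finset.sum_eq_single i] at this
    · simpa using this
    · intro b _ hb
      have : M - (i : ℕ) ≠ M - b := by
        intro h; apply hb; apply Fin.ext; have := i.2; have := b.2; omega
      simp [this]
    · simp
  have hinf : (((f * Polynomial.X).roots.toFinset : Set (ResidueField R))ᶜ).Infinite :=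
    Set.Finite.infinite_compl (Finset.finite_toSet _)
  let e := hinf.natEmbedding
  have he : ∀ n, (e n : ResidueField R) ≠ 0 ∧ f.eval (e n : ResidueField R) ≠ 0 := by
    intro n
    have h1 := (e n).2
    have hfX : f * Polynomial.X ≠ 0 := mul_ne_zero hf Polynomial.X_ne_zero
    simp only [Set.mem_compl_iff, Finset.mem_coe, Multiset.mem_toFinset, Polynomial.mem_roots hfX,
      Polynomial.IsRoot.def, Polynomial.eval_mul, Polynomial.eval_X, mul_eq_zero, not_or] at h1
    exact ⟨h1.2, h1.1⟩
  choose r hr using fun n => residue_surjective (R := R) (e n : ResidueField R)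
  have hunit : ∀ z : R, residue R z ≠ 0 → IsUnit z := fun z hz => residue_ne_zero_iff_isUnit z |>.1 hz
  refine ⟨fun l => match l with | 0 => 0 | n + 1 => r n, rfl, ?_, ?_⟩
  · intro l l' hll
    apply hunit
    rw [map_sub, sub_ne_zero]
    rcases l with _ | l <;> rcases l' with _ | l'
    · exact (hll rfl).elim
    · simpa [hr] using (he l').1.symm
    · simpa [hr] using (he l).1
    · simp only [hr]
      intro h
      apply hll
      rw [e.injective (Subtype.ext h)]
  · intro l hl
    apply hunit
    obtain ⟨n, rfl⟩ := Nat.exists_eq_add_of_le' hl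
    have := (he n).2
    simpa [f, Polynomial.eval_finsetSum, ← hr] using this

end Red9


section Main10
variable {R : Type u} [CommRing R] [IsNoetherianRing R] [IsLocalRing R]
variable {I : Ideal R} {Δ α : R}

theorem Ctx.prime_of_K (c : Ctx I Δ α) {P : Ideal R} (hP : P.IsPrime) {j : ℕ}
    (h : Kid I Δ α ^ j ≤ P) : I ≤ P :=
  hP.le_of_pow_le (c.sq_le_K.trans (hP.le_of_pow_le h))

theorem Ctx.prime_of_red (c : Ctx I Δ α) {J : Ideal R} {j : ℕ}
    (hJ : IsReduction J (Kid I Δ α ^ j)) {P : Ideal R} (hP : P.IsPrime) (h : J ≤ P) : I ≤ P := by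
  obtain ⟨_, r, hr⟩ := hJ
  refine c.prime_of_K hP (j := j) (hP.le_of_pow_le (n := r + 1) ?_)
  rw [hr]
  exact Ideal.mul_le_left.trans h

theorem Ctx.red_min (c : Ctx I Δ α) {f g : R} {j : ℕ}
    (hJ : IsReduction (Ideal.span {f, g}) (Kid I Δ α ^ (j + 1))) :
    IsMinimalReduction (Ideal.span {f, g}) (Kid I Δ α ^ (j + 1)) :=
  min_of_two ((Ideal.pow_le_self (by omega)).trans (c.K_le_I.trans c.le_m))
    (fun P hP h => c.ht2 P hP (c.prime_of_K hP h)) hJ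

theorem Ctx.red_loc (c : Ctx I Δ α) {f g : R} {j : ℕ}
    (hJ : IsReduction (Ideal.span {f, g}) (Kid I Δ α ^ (j + 1))) {p : Ideal R} [p.IsPrime]
    (hp : p ∈ I.minimalPrimes) :
    algebraMap R (Localization.AtPrime p) f ∈ I.map (algebraMap R (Localization.AtPrime p))
      ^ (2 * (j + 1)) ∧
    algebraMap R (Localization.AtPrime p) g ∈ I.map (algebraMap R (Localization.AtPrime p))
      ^ (2 * (j + 1)) ∧ ∃ k, 2 * (j + 1) ≤ k ∧ I.map (algebraMap R (Localization.AtPrime p)) ^ k ≤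
      Ideal.span {algebraMap R (Localization.AtPrime p) f, algebraMap R _ g} *
        I.map (algebraMap R (Localization.AtPrime p)) ^ (k - 2 * (j + 1)) := by
  obtain ⟨hle, r, hr⟩ := hJ
  have e : (Kid I Δ α ^ (j + 1)).map (algebraMap R (Localization.AtPrime p)) =
      I.map (algebraMap R (Localization.AtPrime p)) ^ (2 * (j + 1)) := by
    rw [Ideal.map_pow, c.K_loc hp, ← pow_mul]
  refine ⟨?_, ?_, 2 * (j + 1) * (r + 1), Nat.le_mul_of_pos_right _ (by omega), ?_⟩
  · rw [← e]; exact Ideal.mem_map_of_mem _ (hle (x_mem _ _))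
  · rw [← e]; exact Ideal.mem_map_of_mem _ (hle (y_mem _ _))
  · have h1 := congrArg (Ideal.map (algebraMap R (Localization.AtPrime p))) hr
    rw [Ideal.map_mul, Ideal.map_pow _ _ (r + 1), Ideal.map_pow _ _ r, e, Ideal.map_span, Set.image_pair, ← pow_mul,
      ← pow_mul] at h1
    rw [h1]
    have : 2 * (j + 1) * (r + 1) - 2 * (j + 1) = 2 * (j + 1) * r := by
      rw [Nat.mul_add, mul_one, Nat.add_sub_cancel]
    rw [this]

theorem Ctx.locBD (c : Ctx I Δ α) {f g : R} {j : ℕ}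
    (hJ : IsReduction (Ideal.span {f, g}) (Kid I Δ α ^ (j + 1))) {p : Ideal R} [p.IsPrime]
    (hp : p ∈ I.minimalPrimes) :
    I.map (algebraMap R (Localization.AtPrime p)) ^ (4 * j + 3) ≤
      (Ideal.span {f, g}).map (algebraMap R (Localization.AtPrime p)) ∧
    ∃ m ∈ I.map (algebraMap R (Localization.AtPrime p)) ^ (4 * j + 2),
      I.map (algebraMap R (Localization.AtPrime p)) ^ (4 * j + 2) ≤
      (Ideal.span {f, g}).map (algebraMap R (Localization.AtPrime p)) ⊔ Ideal.span {m} := by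
  obtain ⟨y, hy, hyp⟩ := c.exists_global_y
  obtain ⟨e, h1, _⟩ := c.loc_struct hy hp (hyp p hp)
  obtain ⟨hf, hg, k, hk, hle⟩ := c.red_loc hJ hp
  have hm := loc_le_m hp.1.2
  rw [Ideal.map_span, Set.image_pair]
  rw [e] at hf hg hle hm ⊢
  have := h1.locBD (hm (x_mem _ _)) (by omega) hk hf hg hle
  rwa [show 2 * (2 * (j + 1)) - 1 = 4 * j + 3 by omega,
    show 2 * (2 * (j + 1)) - 2 = 4 * j + 2 by omega] at this

theorem Ctx.red0 (c : Ctx I Δ α) (j : ℕ) :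
    IsReduction (Ideal.span {α ^ (2 * (j + 1)), Δ ^ j * (Δ - 0 * (α * 0))})
      (Kid I Δ α ^ (j + 1)) := c.red1 (zero_mem _) 0 j

theorem Ctx.symb_le [Infinite (ResidueField R)] (c : Ctx I Δ α) {J : Ideal R} {j : ℕ}
    (hJ : IsMinimalReduction J (Kid I Δ α ^ (j + 1))) : symbolicPower I (4 * j + 3) ≤ J := by
  obtain ⟨f, g, rfl⟩ := two_of_min (c.red0 j) hJ
  have hle : Ideal.span {f, g} ≤ I := hJ.1.1.trans ((Ideal.pow_le_self (by omega)).trans c.K_le_I)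
  have hsat := (c.sat_pair (hle (x_mem _ _)) (hle (y_mem _ _)) fun P hP hf hg =>
    c.prime_of_red hJ.1 hP (Ideal.span_le.2 (by rintro w (rfl | rfl); exacts [hf, hg]))).2
  intro z hz
  apply hsat
  intro p hp
  have := hp.1.1
  rw [← mem_loc]
  apply (c.locBD hJ.1 hp).1
  rw [← Ideal.map_pow, mem_loc]
  exact (c.symb_iff _ _).1 hz p hp

theorem Ctx.lower [Infinite (ResidueField R)] (c : Ctx I Δ α) {j t : ℕ} (ht : t ≤ 4 * j + 2)
    (Js : Fin t → Ideal R) (hJ : ∀ i, IsMinimalReduction (Js i) (Kid I Δ α ^ (j + 1)))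
    (hle : ⨅ i, Js i ≤ symbolicPower I (4 * j + 3)) : False := by
  obtain ⟨p, hp, _⟩ := Ideal.exists_minimalPrimes_le c.le_m
  have hpp := hp.1.1
  obtain ⟨y, hy, hyp⟩ := c.exists_global_y
  obtain ⟨e, h1, _⟩ := c.loc_struct hy hp (hyp p hp)
  have hBD : ∀ i, I.map (algebraMap R (Localization.AtPrime p)) ^ (4 * j + 3) ≤
      (Js i).map (algebraMap R (Localization.AtPrime p)) ∧
    ∃ m ∈ I.map (algebraMap R (Localization.AtPrime p)) ^ (4 * j + 2),
      I.map (algebraMap R (Localization.AtPrime p)) ^ (4 * j + 2) ≤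
      (Js i).map (algebraMap R (Localization.AtPrime p)) ⊔ Ideal.span {m} := by
    intro i
    obtain ⟨f, g, hfg⟩ := two_of_min (c.red0 j) (hJ i)
    rw [hfg]
    exact c.locBD (hfg ▸ (hJ i).1) hp
  choose hB m hm hD using hBD
  have hne : I.map (algebraMap R (Localization.AtPrime p)) ≠ ⊤ :=
    ((loc_le_m hp.1.2).trans_lt (lt_top_iff_ne_top.2 (Ideal.IsPrime.ne_top inferInstance))).ne
  have hinf : ⨅ i, (Js i).map (algebraMap R (Localization.AtPrime p)) ≤
      I.map (algebraMap R (Localization.AtPrime p)) ^ (4 * j + 2 + 1) := by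
    intro z hz
    obtain ⟨⟨a, s⟩, hs⟩ := IsLocalization.surj p.primeCompl z
    simp only at hs
    have hu : IsUnit (algebraMap R (Localization.AtPrime p) s) := IsLocalization.map_units _ s
    have ha : ∀ i, ∃ w ∉ p, w * a ∈ Js i := by
      intro i
      rw [← mem_loc, ← hs]
      exact Ideal.mul_mem_right _ _ ((Ideal.mem_iInf.1 hz) i)
    choose w hw hwa using ha
    rw [← Ideal.unit_mul_mem_iff_mem _ hu, mul_comm _ z, hs, ← Ideal.map_pow, mem_loc]
    have h2 : (∏ i, w i) * a ∈ ⨅ i, Js i := by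
      refine Ideal.mem_iInf.2 fun i => ?_
      rw [← Finset.mul_prod_erase _ _ (Finset.mem_univ i), mul_assoc, mul_left_comm]
      exact Ideal.mul_mem_left _ _ (hwa i)
    obtain ⟨w', hw', h3⟩ := (c.symb_iff _ _).1 (hle h2) p hp
    refine ⟨w' * ∏ i, w i, fun h => ?_, by rw [mul_assoc]; exact h3⟩
    rcases hpp.mem_or_mem h with h | h
    · exact hw' h
    · obtain ⟨i, _, hi⟩ := (Ideal.IsPrime.prod_mem_iff (hp := hpp)).1 h
      exact hw i hi
  rw [e] at hne hm hinf hB hD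
  exact h1.lower hne ht _ m hm hB hD hinf

theorem Ctx.shift_struct (c : Ctx I Δ α) {y l : R} (hy : y ∈ I)
    (hyp : ∀ p ∈ I.minimalPrimes, ∀ z ∈ I, ∃ w ∉ p, w * z ∈ Ideal.span {α, y}) {j : ℕ}
    (hJ : IsReduction (Ideal.span {Δ ^ (j + 1), α ^ (2 * j + 1) * (α - l * y)})
      (Kid I Δ α ^ (j + 1))) {p : Ideal R} [p.IsPrime] (hp : p ∈ I.minimalPrimes) :
    RP (algebraMap R (Localization.AtPrime p) (α - l * y)) (algebraMap R _ y) ∧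
    ∃ v, IsUnit v ∧ ∃ i, algebraMap R (Localization.AtPrime p) Δ =
      v * algebraMap R _ y ^ 2 + algebraMap R (Localization.AtPrime p) (α - l * y) * i := by
  obtain ⟨e, h1, _⟩ := c.loc_struct hy hp (hyp p hp)
  have hgI : α - l * y ∈ I := sub_mem c.hα (Ideal.mul_mem_left _ _ hy)
  have hRP := (c.sat_pair hgI c.hΔ fun P hP hg hΔ => c.prime_of_red hJ hP (Ideal.span_le.2 (by
    rintro w (rfl | rfl)
    · exact P.pow_mem_of_mem hΔ _ (by omega)
    · exact P.mul_mem_left _ hg))).1.loc p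
  have hm := loc_le_m hp.1.2 (Ideal.mem_map_of_mem (algebraMap R (Localization.AtPrime p)) hgI)
  obtain ⟨hf, hg, k, hk, hle⟩ := c.red_loc hJ hp
  have hΔ := c.loc_Δ hp
  have e' : I.map (algebraMap R (Localization.AtPrime p)) =
      Ideal.span {algebraMap R (Localization.AtPrime p) (α - l * y), algebraMap R _ y} := by
    rw [e, map_sub, map_mul, span_shift]
  rw [e'] at hΔ hle
  obtain ⟨i, hi, w, ew⟩ := pow_split _ _ _ hΔ
  have hRP2 : RP (algebraMap R (Localization.AtPrime p) (α - l * y)) (algebraMap R _ y) := by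
    refine ⟨hRP.hx, fun a d hcd => hRP.hy a (w * algebraMap R _ y * d + i * a) ?_⟩
    rw [ew]; linear_combination w * algebraMap R _ y * hcd
  refine ⟨hRP2, w, ?_, i, by rw [ew]; ring⟩
  obtain ⟨q, hq⟩ := sub_dvd_pow_sub_pow (algebraMap R (Localization.AtPrime p) Δ)
    (w * algebraMap R _ y ^ 2) (j + 1)
  rcases hRP2.lead (A := w ^ (j + 1)) (B := 0) (f₁ := i * q)
    (g₁ := algebraMap R _ (α ^ (2 * j + 1))) hm hk (by
      rw [map_pow, pow_mul]
      linear_combination hq + q * ew) (by rw [map_mul]; ring) hle with h | h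
  · exact (isUnit_pow_iff (by omega)).1 h
  · exact (not_isUnit_zero h).elim

theorem Ctx.inter (c : Ctx I Δ α) {y : R} (hy : y ∈ I)
    (hyp : ∀ p ∈ I.minimalPrimes, ∀ z ∈ I, ∃ w ∉ p, w * z ∈ Ideal.span {α, y}) {j : ℕ}
    {lam : ℕ → R} (h0 : lam 0 = 0) (hlam : ∀ l l', l ≠ l' → IsUnit (lam l - lam l'))
    (hred : ∀ l, 1 ≤ l → IsReduction (Ideal.span {Δ ^ (j + 1), α ^ (2 * j + 1) * (α - lam l * y)})
      (Kid I Δ α ^ (j + 1))) {z : R}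
    (h1 : ∀ l ≤ 2 * j + 1, z ∈ Ideal.span {α ^ (2 * (j + 1)), Δ ^ j * (Δ - lam l * (α * y))})
    (h2 : ∀ l, 1 ≤ l → l ≤ 2 * j + 1 →
      z ∈ Ideal.span {Δ ^ (j + 1), α ^ (2 * j + 1) * (α - lam l * y)}) :
    z ∈ symbolicPower I (4 * j + 3) := by
  rw [c.symb_iff]
  intro p hp
  have := hp.1.1
  obtain ⟨e, hRP, v, hv, i, hi, hΔ⟩ := c.loc_struct hy hp (hyp p hp)
  have hΔ2 := c.loc_Δ hp
  rw [← mem_loc, Ideal.map_pow]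
  rw [e] at hΔ2 ⊢
  have hmap : ∀ {f g : R}, z ∈ Ideal.span {f, g} → algebraMap R (Localization.AtPrime p) z ∈
      Ideal.span {algebraMap R (Localization.AtPrime p) f, algebraMap R _ g} := by
    intro f g h
    have := Ideal.mem_map_of_mem (algebraMap R (Localization.AtPrime p)) h
    rwa [Ideal.map_span, Set.image_pair] at this
  refine hRP.inter hv hΔ hΔ2 j (fun l => algebraMap R _ (lam l)) (by simp [h0]) ?_ ?_ ?_ ?_
  · intro l _ l' _ hll
    have := (hlam l l' hll).map (algebraMap R (Localization.AtPrime p))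
    rwa [map_sub] at this
  · intro l hl _
    have := c.shift_struct hy hyp (hred l hl) hp
    rwa [map_sub, map_mul] at this
  · intro l hl
    have := hmap (h1 l hl)
    simpa only [map_sub, map_mul, map_pow, mul_add, mul_one] using this
  · intro l hl hl'
    have := hmap (h2 l hl hl')
    simpa only [map_sub, map_mul, map_pow] using this

theorem Ctx.main [Infinite (ResidueField R)] (c : Ctx I Δ α) (j : ℕ) :
    core (Kid I Δ α ^ (j + 1)) = symbolicPower I (4 * j + 3) ∧
    gamma (Kid I Δ α ^ (j + 1)) = ((4 * j + 3 : ℕ) : ℕ∞) := by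
  obtain ⟨y, hy, hyp⟩ := c.exists_global_y
  obtain ⟨M, d, hd, hM⟩ := c.good hy
  obtain ⟨lam, h0, hlam, hl⟩ := exists_lams d hd
  have hred1 := fun l => c.red_min (c.red1 hy (lam l) j)
  have hred2 := fun l hl1 => c.red2 hy (hM (lam l) (hl l hl1)) j
  have hge : symbolicPower I (4 * j + 3) ≤ core (Kid I Δ α ^ (j + 1)) :=
    le_sInf fun J hJ => c.symb_le hJ
  let Js : Fin (4 * j + 3) → Ideal R := fun i =>
    if (i : ℕ) < 2 * j + 2 then Ideal.span {α ^ (2 * (j + 1)), Δ ^ j * (Δ - lam i * (α * y))}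
    else Ideal.span {Δ ^ (j + 1), α ^ (2 * j + 1) * (α - lam (i - (2 * j + 1)) * y)}
  have hJs : ∀ i, IsMinimalReduction (Js i) (Kid I Δ α ^ (j + 1)) := by
    intro i
    by_cases hi : (i : ℕ) < 2 * j + 2
    · simp only [Js, if_pos hi]; exact hred1 i
    · simp only [Js, if_neg hi]; exact c.red_min (hred2 _ (by omega))
  have hinf : ⨅ i, Js i ≤ symbolicPower I (4 * j + 3) := by
    intro z hz
    rw [Ideal.mem_iInf] at hz
    refine c.inter hy hyp h0 hlam hred2 ?_ ?_
    · intro l hl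
      have := hz ⟨l, by omega⟩
      simp only [Js] at this
      rwa [if_pos (by omega)] at this
    · intro l hl1 hl2
      have := hz ⟨l + (2 * j + 1), by omega⟩
      simp only [Js] at this
      rwa [if_neg (by omega), Nat.add_sub_cancel] at this
  have hcoreJ : core (Kid I Δ α ^ (j + 1)) ≤ ⨅ i, Js i := le_iInf fun i => sInf_le (hJs i)
  have hcore : core (Kid I Δ α ^ (j + 1)) = symbolicPower I (4 * j + 3) :=
    le_antisymm (hcoreJ.trans hinf) hge
  refine ⟨hcore, le_antisymm ?_ ?_⟩
  · exact sInf_le ⟨4 * j + 3, rfl, Js, hJs, le_antisymm hcoreJ (hinf.trans hge)⟩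
  · refine le_sInf ?_
    rintro n ⟨t, rfl, Js', hJs', e⟩
    rw [Nat.cast_le]
    by_contra hlt
    exact c.lower (by omega) Js' hJs' (by rw [← e, hcore])

end Main10

theorem mk_ctx {R : Type u} [CommRing R] [IsNoetherianRing R] [IsLocalRing R]
    (hCM : IsCMLocalRing R) (I : Ideal R) (hht : ht I = ((2 : ℕ) : WithBot ℕ∞))
    (hgci : ∀ p : Ideal R, ∀ hp : p ∈ I.minimalPrimes,
      letI : p.IsPrime := hp.1.1
      ∃ rs : List (Localization.AtPrime p),
        RingTheory.Sequence.IsRegular (Localization.AtPrime p) rs ∧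
        Ideal.ofList rs = Ideal.map (algebraMap R (Localization.AtPrime p)) I)
    (Δ α : R) (hΔ : Δ ∈ symbolicPower I 2) (hα : α ∈ I)
    (hlink : I = Submodule.colon (Ideal.span {Δ, α}) I) : Ctx I Δ α := by
  obtain ⟨w, hw, hwΔ⟩ := (mem_symb I 2 Δ).1 hΔ
  refine ⟨hCM, ?_, ?_, ?_, hα, ?_, ?_, hgci⟩
  · apply IsLocalRing.le_maximalIdeal
    rintro rfl
    have : ht (⊤ : Ideal R) = ⊤ := by
      rw [ht]
      refine iInf_eq_top.2 fun p => iInf_eq_top.2 fun hp => ?_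
      exact (p.2.ne_top (top_le_iff.1 hp)).elim
    rw [this] at hht
    exact absurd hht (by decide)
  · intro P hP hIP
    have h1 : ht I ≤ rDim (Localization.AtPrime P) := iInf₂_le (⟨P, hP⟩ : PrimeSpectrum R) hIP
    have h2 : rDim (Localization.AtPrime P) = (P.height : WithBot ℕ∞) :=
      IsLocalization.AtPrime.ringKrullDim_eq_height P _
    rw [hht, h2] at h1
    exact (WithBot.coe_le_coe (a := (2 : ℕ∞))).1 h1
  · have hreg : RegMod w I := regMod_of_notMem fun P hP => hw P ((assP_iff I P).2 hP)
    exact hreg _ (Ideal.pow_le_self (by omega) hwΔ)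
  · intro p hp
    exact ⟨w, hw p (min_ass hp), hwΔ⟩
  · intro z
    nth_rewrite 1 [hlink]
    exact Submodule.mem_colon

end Proof

/-- Corollary 4.4: for a self-linked perfect ideal of height two which is generically
a complete intersection, `core(I^{(2j)}) = I^{(4j-1)}`, and if `R` is Gorenstein
then `γ(I^{(2j)}) = 4j - 1`. -/
theorem statement18 {R : Type u} [CommRing R] [IsNoetherianRing R] [IsLocalRing R]
    (hCM : IsCMLocalRing R) (hres : Infinite (ResidueField R))
    (I : Ideal R) (hperf : IsPerfectIdeal I) (hht : ht I = ((2 : ℕ) : WithBot ℕ∞))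
    (hgci : ∀ p : Ideal R, ∀ hp : p ∈ I.minimalPrimes,
      letI : p.IsPrime := hp.1.1
      ∃ rs : List (Localization.AtPrime p),
        RingTheory.Sequence.IsRegular (Localization.AtPrime p) rs ∧
        Ideal.ofList rs = Ideal.map (algebraMap R (Localization.AtPrime p)) I)
    (Δ α : R) (hΔ : Δ ∈ symbolicPower I 2) (hα : α ∈ I)
    (hlink : I = Submodule.colon (Ideal.span {Δ, α}) I)
    (j : ℕ) (hj : 1 ≤ j) :
    core (symbolicPower I (2 * j)) = symbolicPower I (4 * j - 1) ∧
    (IsGorensteinLocalRing R →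
      gamma (symbolicPower I (2 * j)) = ((4 * j - 1 : ℕ) : ℕ∞)) := by
  have c := mk_ctx hCM I hht hgci Δ α hΔ hα hlink
  obtain ⟨j, rfl⟩ := Nat.exists_eq_add_of_le' hj
  rw [c.symb_even, show 4 * (j + 1) - 1 = 4 * j + 3 by omega]
  exact ⟨(c.main j).1, fun _ => (c.main j).2⟩

end CPU
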